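/- arXiv:1405.2999 — 2 statements merged into one kernel-verified Lean document; each statement's English description precedes it below -/
import Mathlib

section
/- Let n ≥ 2, M ≥ 1, and let E = (E_{αβ}) : ℝⁿ∖{0} → ℂ^{M×M} be C^∞ with E(-x) = E(x) for all x ≠ 0 and with each first-order partial derivative ∂_j E_{αβ} positively homogeneous of degree 1-n. Fix j ∈ {1,…,n}, α,β ∈ {1,…,M}, p ∈ (1,∞), and κ > 0. Then there exists a finite constant C > 0, independent of f, such that for every f ∈ L^p(ℝ^{n-1};ℂ) the function u(x',t) := ∫_{ℝ^{n-1}} (∂_j E_{αβ})(x'-y',t) f(y') dy', (x',t) ∈ ℝⁿ₊, satisfies ‖N_κ u‖_{L^p(ℝ^{n-1})} ≤ C‖f‖_{L^p(ℝ^{n-1})}. -/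
open MeasureTheory Filter Metric Real
open scoped ENNReal NNReal Topology

noncomputable section

/-- The point `(x', t)` of `ℝⁿ`, where `x' ∈ ℝ^{n-1}` and `t ∈ ℝ` is the last coordinate. -/
def toUp {n : ℕ} (x' : EuclideanSpace ℝ (Fin (n - 1))) (t : ℝ) :
    EuclideanSpace ℝ (Fin n) :=
  (WithLp.equiv 2 (Fin n → ℝ)).symm
    (fun i => if h : (i : ℕ) < n - 1 then x' ⟨i, h⟩ else t)

/-- The first `n-1` coordinates of a point of `ℝⁿ`. -/
def xinit {n : ℕ} (x : EuclideanSpace ℝ (Fin n)) : EuclideanSpace ℝ (Fin (n - 1)) :=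
  (WithLp.equiv 2 (Fin (n - 1) → ℝ)).symm
    (fun i => x ⟨(i : ℕ), Nat.lt_of_lt_of_le i.isLt (Nat.sub_le n 1)⟩)

/-- The last coordinate of a point of `ℝⁿ`. -/
def xlast {n : ℕ} (x : EuclideanSpace ℝ (Fin n)) : ℝ :=
  if h : 0 < n then x ⟨n - 1, by omega⟩ else 0

/-- The upper half space `ℝⁿ₊`. -/
def upperHalfSpace (n : ℕ) : Set (EuclideanSpace ℝ (Fin n)) := {x | 0 < xlast x}

/-- The embedding `Fin (n-1) → Fin n`. -/
def finUp {n : ℕ} (i : Fin (n - 1)) : Fin n :=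
  ⟨(i : ℕ), Nat.lt_of_lt_of_le i.isLt (Nat.sub_le n 1)⟩

/-- The last index of `Fin n`. -/
def lastIdx (n : ℕ) (h : 0 < n) : Fin n := ⟨n - 1, by omega⟩

/-- Partial derivative along the `i`-th coordinate direction. -/
def pd {n : ℕ} {F : Type*} [NormedAddCommGroup F] [NormedSpace ℝ F]
    (i : Fin n) (u : EuclideanSpace ℝ (Fin n) → F) (x : EuclideanSpace ℝ (Fin n)) : F :=
  fderiv ℝ u x (EuclideanSpace.single i 1)

/-- Iterated mixed partial derivative along the string of coordinate directions `d`. -/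
def mpd {n : ℕ} {F : Type*} [NormedAddCommGroup F] [NormedSpace ℝ F]
    (k : ℕ) (d : Fin k → Fin n) (u : EuclideanSpace ℝ (Fin n) → F)
    (x : EuclideanSpace ℝ (Fin n)) : F :=
  iteratedFDeriv ℝ k u x (fun i => EuclideanSpace.single (d i) 1)

/-- The nontangential approach filter for the cone `Γ_κ(x')` (points written as `(y', t)`). -/
def ntFilter {n : ℕ} (κ : ℝ) (x' : EuclideanSpace ℝ (Fin (n - 1))) :
    Filter ((EuclideanSpace ℝ (Fin (n - 1))) × ℝ) :=
  (nhds (x', (0 : ℝ))) ⊓ Filter.principal {q | 0 < q.2 ∧ dist x' q.1 < κ * q.2}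

/-- The nontangential maximal function (aperture `κ`) of `u : ℝⁿ → F`,
as an `ℝ≥0∞`-valued function on `ℝ^{n-1}`. -/
def ntMax {n : ℕ} {F : Type*} [NormedAddCommGroup F] (κ : ℝ)
    (u : EuclideanSpace ℝ (Fin n) → F) (x' : EuclideanSpace ℝ (Fin (n - 1))) : ℝ≥0∞ :=
  ⨆ (y' : EuclideanSpace ℝ (Fin (n - 1))) (t : ℝ) (_ : 0 < t ∧ dist x' y' < κ * t),
    (‖u (toUp y' t)‖₊ : ℝ≥0∞)

/-- The `L^p` norm (`p ∈ (0,∞]`) of an `ℝ≥0∞`-valued function on `ℝ^m`. -/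
def lpNormE {m : ℕ} (g : EuclideanSpace ℝ (Fin m) → ℝ≥0∞) (p : ℝ≥0∞) : ℝ≥0∞ :=
  if p = ∞ then essSup g volume
  else (∫⁻ x', (g x') ^ p.toReal) ^ (1 / p.toReal)

/-- The Hardy–Littlewood maximal function. -/
def hlMax {m : ℕ} {F : Type*} [NormedAddCommGroup F]
    (f : EuclideanSpace ℝ (Fin m) → F) (x' : EuclideanSpace ℝ (Fin m)) : ℝ≥0∞ :=
  ⨆ (r : ℝ) (_ : 0 < r),
    (volume (ball x' r))⁻¹ * ∫⁻ y' in ball x' r, (‖f y'‖₊ : ℝ≥0∞)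

/-- The Legendre-Hadamard ellipticity condition for the coefficient tensor `A`,
where `A r s α β` stands for `a^{αβ}_{rs}`. -/
def LegendreHadamard {n M : ℕ} (A : Fin n → Fin n → Fin M → Fin M → ℂ) : Prop :=
  ∃ κ₀ : ℝ, 0 < κ₀ ∧ ∀ (ξ : Fin n → ℝ) (η : Fin M → ℂ),
    κ₀ * (∑ r, ξ r ^ 2) * (∑ a, ‖η a‖ ^ 2) ≤
      (∑ r, ∑ s, ∑ a, ∑ b, A r s a b * ξ r * ξ s * (starRingEnd ℂ) (η a) * η b).re

/-- `g` is the weak (distributional) mixed partial derivative of `f` of order `k`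
along the string of directions `d`. -/
def IsWeakDeriv {m : ℕ} {F : Type*} [NormedAddCommGroup F] [NormedSpace ℝ F]
    (k : ℕ) (d : Fin k → Fin m) (f g : EuclideanSpace ℝ (Fin m) → F) : Prop :=
  ∀ φ : EuclideanSpace ℝ (Fin m) → ℝ, ContDiff ℝ (⊤ : ℕ∞) φ → HasCompactSupport φ →
    ∫ x', (mpd k d φ x') • f x' = ((-1 : ℝ) ^ k) • ∫ x', φ x' • g x'

/-- The surface area `ω_{n-1}` of the unit sphere `S^{n-1}` in `ℝⁿ`. -/
def sphereArea (n : ℕ) : ℝ :=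
  (n : ℝ) * (volume (ball (0 : EuclideanSpace ℝ (Fin n)) (1 : ℝ))).toReal

/-- The parabolic dilation `F_t(x') = t^{1-n} F(x'/t)` of a matrix-valued kernel. -/
def matDil {n M : ℕ} (P : EuclideanSpace ℝ (Fin (n - 1)) → Matrix (Fin M) (Fin M) ℂ)
    (t : ℝ) (x' : EuclideanSpace ℝ (Fin (n - 1))) : Matrix (Fin M) (Fin M) ℂ :=
  (t ^ ((1 : ℤ) - (n : ℤ))) • P (t⁻¹ • x')

/-- The convolution `(P_t * f)(x')` of a dilated matrix kernel with a `ℂ^M`-valued function. -/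
def matConv {n M : ℕ} (P : EuclideanSpace ℝ (Fin (n - 1)) → Matrix (Fin M) (Fin M) ℂ)
    (f : EuclideanSpace ℝ (Fin (n - 1)) → EuclideanSpace ℂ (Fin M))
    (t : ℝ) (x' : EuclideanSpace ℝ (Fin (n - 1))) : EuclideanSpace ℂ (Fin M) :=
  (WithLp.equiv 2 (Fin M → ℂ)).symm
    (fun γ => ∫ y', ∑ α, matDil P t (x' - y') γ α * f y' α)

namespace NT
section P1


def HLM (g : ℝ → ℝ≥0∞) (x : ℝ) : ℝ≥0∞ :=
  ⨆ j : ℤ, (ENNReal.ofReal (2 * 2 ^ j))⁻¹ * ∫⁻ y in closedBall x (2 ^ j), g y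

lemma measurable_ballInt {g : ℝ → ℝ≥0∞} (hg : Measurable g) (r : ℝ) :
    Measurable (fun x : ℝ => ∫⁻ y in closedBall x r, g y) := by
  have h : (fun x : ℝ => ∫⁻ y in closedBall x r, g y) =
      fun x => ∫⁻ y, Set.indicator {q : ℝ × ℝ | dist q.2 q.1 ≤ r} (fun q => g q.2) (x, y) := by
    funext x
    rw [← lintegral_indicator measurableSet_closedBall]
    rfl
  rw [h]
  apply Measurable.lintegral_prod_right'
  refine (hg.comp measurable_snd).indicator ?_
  exact (isClosed_le (by fun_prop) continuous_const).measurableSet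

lemma measurable_HLM {g : ℝ → ℝ≥0∞} (hg : Measurable g) : Measurable (HLM g) := by
  unfold HLM
  exact Measurable.iSup fun j => (measurable_ballInt hg _).const_mul _

lemma HLM_weak {g : ℝ → ℝ≥0∞} (a : ℝ≥0∞) (ha : a ≠ 0) :
    a * volume {x | a < HLM g x} ≤ 4 * ∫⁻ y, g y := by
  by_cases hI : ∫⁻ y, g y = ∞
  · rw [hI]; simp
  by_cases hat : a = ∞
  · subst hat; simp
  have hex : ∀ x ∈ {x | a < HLM g x}, ∃ j : ℤ,
      a * ENNReal.ofReal (2 * 2 ^ j) ≤ ∫⁻ y in closedBall x (2 ^ j), g y := by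
    intro x hx
    rw [Set.mem_ofPred_eq, HLM] at hx
    obtain ⟨j, hj⟩ := lt_iSup_iff.1 hx
    refine ⟨j, ?_⟩
    have hpos : (0:ℝ) < 2 * 2 ^ j := by positivity
    have h1 : ENNReal.ofReal (2 * 2 ^ j) ≠ 0 := by simpa using hpos
    have := mul_le_mul_left hj.le (ENNReal.ofReal (2 * 2 ^ j))
    refine this.trans ?_
    rw [mul_comm, ← mul_assoc, ENNReal.mul_inv_cancel h1 ENNReal.ofReal_ne_top, one_mul]
  choose! J hJ using hex
  have hR : ∀ x ∈ {x | a < HLM g x}, (2:ℝ) ^ (J x) ≤ ((∫⁻ y, g y) / a).toReal := by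
    intro x hx
    have h1 := (hJ x hx).trans (setLIntegral_le_lintegral _ _)
    have h2 : ENNReal.ofReal (2 * 2 ^ (J x)) ≤ (∫⁻ y, g y) / a := by
      rw [ENNReal.le_div_iff_mul_le (Or.inl ha) (Or.inl hat), mul_comm]; exact h1
    have h3 : (∫⁻ y, g y) / a ≠ ∞ := ENNReal.div_ne_top hI ha
    have h4 := ENNReal.toReal_mono h3 h2
    have hpos : (0:ℝ) < 2 ^ (J x) := by positivity
    rw [ENNReal.toReal_ofReal (by positivity)] at h4
    linarith
  obtain ⟨u, hut, hdisj, hcov⟩ := Vitali.exists_disjoint_subfamily_covering_enlargement_closedBall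
    {x | a < HLM g x} id (fun x => (2:ℝ) ^ (J x)) _ hR 4 (by norm_num)
  have hucount : u.Countable := by
    refine hdisj.countable_of_nonempty_interior ?_
    intro x _
    refine ⟨x, ?_⟩
    have : (0:ℝ) < 2 ^ (J x) := by positivity
    rw [interior_closedBall _ this.ne']
    simpa using this
  have hsub : {x | a < HLM g x} ⊆ ⋃ b ∈ u, closedBall b (4 * 2 ^ (J b)) := by
    intro x hx
    obtain ⟨b, hb, hs⟩ := hcov x hx
    simp only [Set.mem_iUnion]
    exact ⟨b, hb, hs (mem_closedBall_self (by positivity))⟩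
  calc a * volume {x | a < HLM g x}
      ≤ a * ∑' b : u, volume (closedBall (b:ℝ) (4 * 2 ^ (J b))) := by
        gcongr
        exact (measure_mono hsub).trans (measure_biUnion_le _ hucount _)
    _ = ∑' b : u, 4 * (a * ENNReal.ofReal (2 * 2 ^ (J b))) := by
        rw [← ENNReal.tsum_mul_left]
        congr 1; funext b
        rw [Real.volume_closedBall, show (2 * (4 * (2:ℝ) ^ J b)) = 4 * (2 * 2 ^ J b) by ring,
          ENNReal.ofReal_mul (by norm_num)]
        simp only [ENNReal.ofReal_ofNat]
        ring
    _ ≤ ∑' b : u, 4 * ∫⁻ y in closedBall (b:ℝ) (2 ^ (J b)), g y := by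
        gcongr with b
        exact hJ b (hut b.2)
    _ = 4 * ∫⁻ y in ⋃ b ∈ u, closedBall (b:ℝ) (2 ^ (J b)), g y := by
        rw [ENNReal.tsum_mul_left, lintegral_biUnion hucount (fun _ _ => measurableSet_closedBall)
          (by simpa using hdisj)]
    _ ≤ 4 * ∫⁻ y, g y := by
        gcongr
        exact Measure.restrict_le_self

lemma HLM_le_const {g : ℝ → ℝ≥0∞} {B : ℝ≥0∞} (hB : ∀ x, g x ≤ B) (x : ℝ) : HLM g x ≤ B := by
  refine iSup_le fun j => ?_
  have hpos : (0:ℝ) < 2 * 2 ^ j := by positivity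
  have h1 : ENNReal.ofReal (2 * 2 ^ j) ≠ 0 := by simpa using hpos
  calc (ENNReal.ofReal (2 * 2 ^ j))⁻¹ * ∫⁻ y in closedBall x (2 ^ j), g y
      ≤ (ENNReal.ofReal (2 * 2 ^ j))⁻¹ * ∫⁻ y in closedBall x (2 ^ j), B := by
        gcongr with y; exact hB y
    _ = B := by
        rw [setLIntegral_const, Real.volume_closedBall, mul_comm B, ← mul_assoc,
          ENNReal.inv_mul_cancel h1 ENNReal.ofReal_ne_top, one_mul]

lemma HLM_add_le (g h : ℝ → ℝ≥0∞) (hg : Measurable g) (x : ℝ) :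
    HLM (fun y => g y + h y) x ≤ HLM g x + HLM h x := by
  refine iSup_le fun j => ?_
  rw [lintegral_add_left hg, mul_add]
  exact add_le_add (le_iSup (fun j : ℤ => (ENNReal.ofReal (2 * 2 ^ j))⁻¹ * ∫⁻ y in closedBall x (2 ^ j), g y) j)
    (le_iSup (fun j : ℤ => (ENNReal.ofReal (2 * 2 ^ j))⁻¹ * ∫⁻ y in closedBall x (2 ^ j), h y) j)

lemma HLM_mono {g h : ℝ → ℝ≥0∞} (hgh : ∀ y, g y ≤ h y) (x : ℝ) : HLM g x ≤ HLM h x := by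
  unfold HLM
  gcongr with j y
  exact hgh y

lemma HLM_dist {g : ℝ → ℝ} (hg : Measurable g) (t : ℝ) (ht : 0 < t) :
    volume {x | ENNReal.ofReal t < HLM (fun y => ENNReal.ofReal (g y)) x}
      ≤ 8 * ENNReal.ofReal (t⁻¹) * ∫⁻ y in {y | t < 2 * g y}, ENNReal.ofReal (g y) := by
  set G : ℝ → ℝ≥0∞ := Set.indicator {y | t < 2 * g y} (fun y => ENNReal.ofReal (g y)) with hG
  have hms : MeasurableSet {y | t < 2 * g y} := measurableSet_lt measurable_const (hg.const_mul 2)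
  have hGm : Measurable G := (hg.ennreal_ofReal).indicator hms
  have hle : ∀ x, HLM (fun y => ENNReal.ofReal (g y)) x ≤ HLM G x + ENNReal.ofReal (t/2) := by
    intro x
    refine (HLM_mono (h := fun y => G y + ENNReal.ofReal (t/2)) ?_ x).trans ?_
    · intro y
      by_cases hy : t < 2 * g y
      · rw [hG, Set.indicator_of_mem (by exact hy)]; exact le_self_add
      · refine le_trans ?_ le_add_self
        apply ENNReal.ofReal_le_ofReal; linarith
    · refine (HLM_add_le G _ hGm x).trans ?_
      gcongr
      exact HLM_le_const (fun _ => le_rfl) x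
  have hsub : {x | ENNReal.ofReal t < HLM (fun y => ENNReal.ofReal (g y)) x} ⊆
      {x | ENNReal.ofReal (t/2) < HLM G x} := by
    intro x hx
    by_contra hcon
    simp only [Set.mem_ofPred_eq, not_lt] at hcon hx
    have := (hle x).trans (add_le_add_left hcon _)
    rw [← ENNReal.ofReal_add (by positivity) (by positivity), add_halves] at this
    exact absurd hx (not_lt.2 this)
  have hw := HLM_weak (g := G) (ENNReal.ofReal (t/2)) (by simpa using ht)
  have hI : ∫⁻ y, G y = ∫⁻ y in {y | t < 2 * g y}, ENNReal.ofReal (g y) := lintegral_indicator hms _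
  rw [hI] at hw
  refine (measure_mono hsub).trans ?_
  set V := volume {x | ENNReal.ofReal (t/2) < HLM G x}
  have h2 : V = 2 * ENNReal.ofReal (t⁻¹) * (ENNReal.ofReal (t/2) * V) := by
    rw [← mul_assoc, show (2:ℝ≥0∞) = ENNReal.ofReal 2 by simp, ← ENNReal.ofReal_mul (by norm_num),
      ← ENNReal.ofReal_mul (by positivity)]
    rw [show 2 * t⁻¹ * (t/2) = 1 by field_simp]; simp
  rw [h2]
  calc _ ≤ 2 * ENNReal.ofReal (t⁻¹) * (4 * ∫⁻ y in {y | t < 2 * g y}, ENNReal.ofReal (g y)) := by gcongr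
    _ = _ := by ring

theorem HLM_strong (p : ℝ) (hp : 1 < p) : ∃ C : ℝ≥0, ∀ g : ℝ → ℝ, Measurable g → (∀ x, 0 ≤ g x) →
    (∃ B : ℝ, ∀ x, g x ≤ B) →
    ∫⁻ x, (HLM (fun y => ENNReal.ofReal (g y)) x) ^ p ≤ C * ∫⁻ x, ENNReal.ofReal (g x) ^ p := by
  refine ⟨Real.toNNReal (p * 8 * (p-1)⁻¹ * 2 ^ (p-1)), ?_⟩
  rintro g hg hg0 ⟨B, hB⟩
  set Mg := HLM (fun y => ENNReal.ofReal (g y)) with hMg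
  have hfin : ∀ x, Mg x ≠ ∞ := fun x => ne_top_of_le_ne_top ENNReal.ofReal_ne_top
    (HLM_le_const (fun y => ENNReal.ofReal_le_ofReal (hB y)) x)
  have hMm : Measurable Mg := measurable_HLM hg.ennreal_ofReal
  have h1 : ∫⁻ x, (Mg x) ^ p = ∫⁻ x, ENNReal.ofReal ((Mg x).toReal ^ p) := by
    congr 1; funext x
    rw [← ENNReal.ofReal_rpow_of_nonneg ENNReal.toReal_nonneg (by linarith), ENNReal.ofReal_toReal (hfin x)]
  rw [h1, lintegral_rpow_eq_lintegral_meas_lt_mul volume (Eventually.of_forall fun x => ENNReal.toReal_nonneg)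
    hMm.ennreal_toReal.aemeasurable (by linarith)]
  set ν := volume.withDensity (fun y => ENNReal.ofReal (g y)) with hν
  have hms : ∀ t : ℝ, MeasurableSet {y | t < 2 * g y} :=
    fun t => measurableSet_lt measurable_const (hg.const_mul 2)
  have h2 := lintegral_rpow_eq_lintegral_meas_lt_mul ν (f := fun y => 2 * g y)
    (Eventually.of_forall fun x => by have := hg0 x; simp; linarith) (hg.const_mul 2).aemeasurable (p := p - 1) (by linarith)
  have h3 : ∫⁻ t in Set.Ioi (0:ℝ), volume {a | t < (Mg a).toReal} * ENNReal.ofReal (t ^ (p-1)) ≤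
      8 * ∫⁻ t in Set.Ioi (0:ℝ), ν {a | t < 2 * g a} * ENNReal.ofReal (t ^ (p-1-1)) := by
    rw [← lintegral_const_mul' _ _ (by norm_num)]
    refine setLIntegral_mono' measurableSet_Ioi ?_
    intro t ht
    have ht : 0 < t := ht
    have e1 : {a | t < (Mg a).toReal} = {a | ENNReal.ofReal t < Mg a} := by
      ext a
      simp only [Set.mem_ofPred_eq]
      rw [ENNReal.ofReal_lt_iff_lt_toReal ht.le (hfin a)]
    rw [e1, hν, withDensity_apply _ (hms t)]
    calc _ ≤ (8 * ENNReal.ofReal (t⁻¹) * ∫⁻ y in {y | t < 2 * g y}, ENNReal.ofReal (g y)) *  ENNReal.ofReal (t ^ (p-1)) := by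
          gcongr; exact HLM_dist hg t ht
      _ = 8 * ((∫⁻ y in {y | t < 2 * g y}, ENNReal.ofReal (g y)) * (ENNReal.ofReal (t⁻¹) * ENNReal.ofReal (t ^ (p-1)))) := by ring
      _ = _ := by
          rw [← ENNReal.ofReal_mul (by positivity), Real.rpow_sub_one ht.ne' (p-1)]
          rw [div_eq_inv_mul]
  have h4 : ∫⁻ t in Set.Ioi (0:ℝ), ν {a | t < 2 * g a} * ENNReal.ofReal (t ^ (p-1-1)) =
     ENNReal.ofReal ((p-1)⁻¹) * ∫⁻ y, ENNReal.ofReal ((2 * g y) ^ (p-1)) ∂ν := by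
    rw [h2, ← mul_assoc, ← ENNReal.ofReal_mul (by rw [inv_nonneg]; linarith), inv_mul_cancel₀ (by linarith)]
    simp
  have h5 : ∫⁻ y, ENNReal.ofReal ((2 * g y) ^ (p-1)) ∂ν = ENNReal.ofReal (2 ^ (p-1)) * ∫⁻ y, ENNReal.ofReal (g y) ^ p := by
    rw [hν, lintegral_withDensity_eq_lintegral_mul _ hg.ennreal_ofReal
      ((hg.const_mul 2).pow_const (p-1)).ennreal_ofReal, ← lintegral_const_mul' _ _ ENNReal.ofReal_ne_top]
    congr 1; funext y
    simp only [Pi.mul_apply]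
    rw [Real.mul_rpow (by norm_num) (hg0 y), ← ENNReal.ofReal_mul (hg0 y),
      ENNReal.ofReal_rpow_of_nonneg (hg0 y) (by linarith), ← ENNReal.ofReal_mul (by positivity)]
    congr 1
    rcases (hg0 y).eq_or_lt with h | h
    · rw [← h, Real.zero_rpow (by linarith), Real.zero_rpow (by linarith)]; ring
    · rw [Real.rpow_sub_one h.ne']; field_simp
  calc _ ≤ ENNReal.ofReal p * (8 * (ENNReal.ofReal ((p-1)⁻¹) * (ENNReal.ofReal (2 ^ (p-1)) * ∫⁻ y, ENNReal.ofReal (g y) ^ p))) := by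
        rw [← h5, ← h4]; gcongr
    _ = _ := by
        have hp1 : 0 < p - 1 := by linarith
        have : ((Real.toNNReal (p * 8 * (p-1)⁻¹ * 2 ^ (p-1)) : ℝ≥0) : ℝ≥0∞) = ENNReal.ofReal (p * 8 * (p-1)⁻¹ * 2 ^ (p-1)) := rfl
        rw [this, ENNReal.ofReal_mul (by positivity), ENNReal.ofReal_mul (by positivity), ENNReal.ofReal_mul (by positivity)]
        simp only [ENNReal.ofReal_ofNat]
        ring

end P1
end NT

namespace NT
section P2


def pk (s r : ℝ) : ℝ := s / (s ^ 2 + r ^ 2)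
def qk (s r : ℝ) : ℝ := r / (s ^ 2 + r ^ 2)

lemma pk_nonneg {s : ℝ} (hs : 0 < s) (r : ℝ) : 0 ≤ pk s r := by unfold pk; positivity
lemma pk_pos {s : ℝ} (hs : 0 < s) (r : ℝ) : 0 < pk s r := by unfold pk; positivity

lemma continuous_pk {s : ℝ} (hs : 0 < s) : Continuous (pk s) := by
  unfold pk
  exact continuous_const.div (by fun_prop) (fun r => by positivity)
lemma continuous_qk {s : ℝ} (hs : 0 < s) : Continuous (qk s) := by
  unfold qk
  exact continuous_id.div (by fun_prop) (fun r => by positivity)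

lemma pk_le_two {s t : ℝ} (hs : 0 < s) (hst : s ≤ t) (hts : t ≤ 2 * s) (r : ℝ) : pk t r ≤ 2 * pk s r := by
  have ht : 0 < t := hs.trans_le hst
  unfold pk
  rw [← mul_div_assoc]
  apply div_le_div₀ (by positivity) hts (by positivity)
  gcongr

lemma pk_dyadic (s : ℝ) (hs : 0 < s) (r : ℝ) :
    ENNReal.ofReal (pk s r) ≤ ∑' k : ℕ, ENNReal.ofReal (4 * (1/2)^k * (2^k*s)⁻¹) *
      Set.indicator (closedBall (0:ℝ) (2^k*s)) 1 r := by
  have hex : ∃ k : ℕ, |r| ≤ 2^k*s := by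
    obtain ⟨k, hk⟩ := pow_unbounded_of_one_lt (|r|/s) (one_lt_two)
    refine ⟨k, ?_⟩
    rw [div_lt_iff₀ hs] at hk; exact hk.le
  classical
  set k := Nat.find hex with hk
  have hk1 : |r| ≤ 2^k*s := Nat.find_spec hex
  refine le_trans ?_ (ENNReal.le_tsum k)
  rw [Set.indicator_of_mem (by simpa using hk1)]
  simp only [Pi.one_apply, mul_one]
  apply ENNReal.ofReal_le_ofReal
  unfold pk
  rcases hk0 : k with _ | m
  · simp only [pow_zero, mul_one, one_mul]
    rw [div_le_iff₀ (by positivity)]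
    have : s = s⁻¹ * s^2 := by field_simp
    nlinarith [sq_nonneg r, inv_pos.2 hs, mul_nonneg (inv_pos.2 hs).le (sq_nonneg r)]
  · have hm : ¬ |r| ≤ 2^m*s := Nat.find_min hex (by omega)
    push Not at hm
    have h2 : (2^m*s)^2 ≤ r^2 := by
      rw [← sq_abs r]; gcongr
    calc s / (s^2+r^2) ≤ s / (2^m*s)^2 := by
          gcongr; nlinarith [sq_nonneg s]
      _ = _ := by
          rw [one_div, inv_pow]; field_simp; ring

lemma pois_le_dyadic {g : ℝ → ℝ≥0∞} (hg : Measurable g) (j : ℤ) (x : ℝ) :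
    ∫⁻ y, ENNReal.ofReal (pk (2^j) (x - y)) * g y ≤ 16 * HLM g x := by
  have hs : (0:ℝ) < 2^j := by positivity
  calc ∫⁻ y, ENNReal.ofReal (pk (2^j) (x - y)) * g y
      ≤ ∫⁻ y, ∑' k : ℕ, ENNReal.ofReal (4 * (1/2)^k * (2^k*2^j)⁻¹) *
          Set.indicator (closedBall x (2^k*2^j)) g y := by
        apply lintegral_mono
        intro y
        refine (mul_le_mul_left (pk_dyadic _ hs (x-y)) (g y)).trans ?_
        rw [← ENNReal.tsum_mul_right]
        apply ENNReal.tsum_le_tsum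
        intro k
        rw [mul_assoc]
        gcongr
        by_cases h : y ∈ closedBall x (2^k*2^j)
        · rw [Set.indicator_of_mem h]
          rw [Set.indicator_of_mem (by rw [mem_closedBall, Real.dist_eq] at *; rwa [sub_zero, abs_sub_comm])]
          simp
        · rw [Set.indicator_of_notMem h]
          rw [Set.indicator_of_notMem (by rw [mem_closedBall, Real.dist_eq] at *; rwa [sub_zero, abs_sub_comm])]
          simp
    _ = ∑' k : ℕ, ENNReal.ofReal (4 * (1/2)^k * (2^k*2^j)⁻¹) * ∫⁻ y in closedBall x (2^k*2^j), g y := by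
        rw [lintegral_tsum]
        · congr 1; funext k
          rw [lintegral_const_mul' _ _ ENNReal.ofReal_ne_top, lintegral_indicator measurableSet_closedBall]
        · intro k
          exact ((hg.indicator measurableSet_closedBall).const_mul _).aemeasurable
    _ ≤ ∑' k : ℕ, 8 * ENNReal.ofReal ((1/2)^k) * HLM g x := by
        apply ENNReal.tsum_le_tsum
        intro k
        have h1 : ((2:ℝ)^k*2^j) = 2^((k:ℤ)+j) := by rw [zpow_add₀ (by norm_num)]; simp
        have hle := le_iSup (fun j : ℤ => (ENNReal.ofReal (2 * 2 ^ j))⁻¹ * ∫⁻ y in closedBall x (2 ^ j), g y) ((k:ℤ)+j)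
        rw [← ENNReal.ofReal_inv_of_pos (by positivity)] at hle
        rw [h1]
        have h2 : ENNReal.ofReal (4 * (1/2)^k * (2^((k:ℤ)+j))⁻¹) = 8 * ENNReal.ofReal ((1/2)^k) * ENNReal.ofReal ((2*2^((k:ℤ)+j))⁻¹) := by
          rw [show (8:ℝ≥0∞) = ENNReal.ofReal 8 by simp, ← ENNReal.ofReal_mul (by norm_num), ← ENNReal.ofReal_mul (by positivity)]
          congr 1
          field_simp; norm_num
        rw [h2, mul_assoc]
        gcongr
        exact hle
    _ = 16 * HLM g x := by
        rw [ENNReal.tsum_mul_right, ENNReal.tsum_mul_left]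
        congr 1
        rw [← ENNReal.ofReal_tsum_of_nonneg (fun k => by positivity) (summable_geometric_two), tsum_geometric_two]
        simp only [ENNReal.ofReal_ofNat]
        norm_num

lemma exists_dyadic {t : ℝ} (ht : 0 < t) : ∃ j : ℤ, (2:ℝ)^j ≤ t ∧ t ≤ 2 * 2^j := by
  obtain ⟨j, h1, h2⟩ := exists_mem_Ico_zpow ht one_lt_two
  refine ⟨j, h1, ?_⟩
  rw [zpow_add_one₀ (by norm_num)] at h2
  linarith

lemma pois_le {g : ℝ → ℝ≥0∞} (hg : Measurable g) {t : ℝ} (ht : 0 < t) (x : ℝ) :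
    ∫⁻ y, ENNReal.ofReal (pk t (x - y)) * g y ≤ 32 * HLM g x := by
  obtain ⟨j, h1, h2⟩ := exists_dyadic ht
  calc ∫⁻ y, ENNReal.ofReal (pk t (x - y)) * g y
      ≤ ∫⁻ y, 2 * (ENNReal.ofReal (pk (2^j) (x - y)) * g y) := by
        apply lintegral_mono
        intro y
        simp only
        rw [← mul_assoc]
        gcongr
        rw [show (2:ℝ≥0∞) = ENNReal.ofReal 2 by simp, ← ENNReal.ofReal_mul (by norm_num)]
        exact ENNReal.ofReal_le_ofReal (pk_le_two (by positivity) h1 h2 _)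
    _ ≤ 2 * (16 * HLM g x) := by
        rw [lintegral_const_mul' _ _ (by norm_num)]
        gcongr
        exact pois_le_dyadic hg j x
    _ = _ := by rw [← mul_assoc]; norm_num

end P2
end NT

namespace NT
section P3


lemma cauchy_line (G : ℂ → ℂ) (s : ℝ) (C p : ℝ) (hp : 1 < p)
    (hG : DifferentiableOn ℂ G {z | s ≤ z.im})
    (hb : ∀ z : ℂ, s ≤ z.im → ‖G z‖ ≤ C * (1 + ‖z‖) ^ (-p)) :
    Integrable (fun x : ℝ => G (x + s * Complex.I)) ∧ ∫ x : ℝ, G (x + s * Complex.I) = 0 := by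
  have hC : 0 ≤ C := by
    have := (norm_nonneg _).trans (hb (s * Complex.I) (by simp))
    exact nonneg_of_mul_nonneg_left this (by positivity)
  have hcont : Continuous (fun x : ℝ => G (x + s * Complex.I)) := by
    rw [← continuousOn_univ]
    exact hG.continuousOn.comp (by fun_prop) (fun x _ => by simp)
  have hint : Integrable (fun x : ℝ => G (x + s * Complex.I)) := by
    have h1 : Integrable (fun x : ℝ => C * (1 + ‖x‖) ^ (-p)) :=
      (integrable_one_add_norm (by simpa using hp)).const_mul C
    refine h1.mono' hcont.aestronglyMeasurable (Eventually.of_forall fun x => ?_)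
    refine (hb _ (by simp)).trans ?_
    gcongr ?_ * ?_
    apply Real.rpow_le_rpow_of_nonpos (by positivity) _ (by linarith)
    gcongr
    have := Complex.abs_re_le_norm (x + s * Complex.I)
    simpa using this
  refine ⟨hint, ?_⟩
  have ht1 : Tendsto (fun N : ℝ => ∫ x in (-N)..N, G (x + s * Complex.I)) atTop
      (𝓝 (∫ x : ℝ, G (x + s * Complex.I))) :=
    intervalIntegral_tendsto_integral hint tendsto_neg_atTop_atBot tendsto_id
  have ht2 : Tendsto (fun N : ℝ => 6 * C * N ^ (-(p-1))) atTop (𝓝 0) := by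
    have := (tendsto_rpow_neg_atTop (show 0 < p - 1 by linarith)).const_mul (6 * C)
    simpa using this
  refine tendsto_nhds_unique ht1 (squeeze_zero_norm' ?_ ht2)
  filter_upwards [eventually_gt_atTop (0:ℝ), eventually_gt_atTop (-s)] with N hN hNs
  have hbN : ∀ z : ℂ, s ≤ z.im → N ≤ ‖z‖ → ‖G z‖ ≤ C * N ^ (-p) := by
    intro z h1 h2
    refine (hb z h1).trans ?_
    gcongr ?_ * ?_
    exact Real.rpow_le_rpow_of_nonpos hN (by linarith) (by linarith)
  set b := s + 2 * N with hbdef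
  have hsb : s ≤ b := by linarith
  have hrect := Complex.integral_boundary_rect_eq_zero_of_differentiableOn G (⟨-N, s⟩ : ℂ) (⟨N, b⟩ : ℂ)
    (hG.mono (by
      intro z hz
      rw [Complex.mem_reProdIm] at hz
      have := hz.2
      simp only at this
      rw [Set.uIcc_of_le hsb] at this
      exact this.1))
  simp only at hrect
  have e1 : ‖∫ x : ℝ in (-N)..N, G (x + (b:ℂ) * Complex.I)‖ ≤ C * N ^ (-p) * |N - (-N)| := by
    apply intervalIntegral.norm_integral_le_of_norm_le_const
    intro x _
    refine hbN _ (by simp [hsb]) ?_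
    refine le_trans ?_ (Complex.abs_im_le_norm _)
    simp only [Complex.add_im, Complex.ofReal_im, Complex.mul_im, Complex.ofReal_re, Complex.I_im, Complex.I_re]
    rw [abs_of_nonneg] <;> simp <;> linarith
  have e2 : ∀ a : ℝ, |a| = N → ‖∫ y : ℝ in s..b, G ((a:ℂ) + y * Complex.I)‖ ≤ C * N ^ (-p) * |b - s| := by
    intro a ha
    apply intervalIntegral.norm_integral_le_of_norm_le_const
    intro y hy
    rw [Set.uIoc_of_le hsb] at hy
    refine hbN _ (by simp [hy.1.le]) ?_
    have := (Complex.abs_re_le_norm ((a:ℂ) + y * Complex.I))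
    simp at this
    linarith
  have e3 := e2 N (abs_of_pos hN)
  have e4 := e2 (-N) (by rw [abs_neg, abs_of_pos hN])
  have key : ∫ x in (-N)..N, G (x + s * Complex.I) = (∫ x : ℝ in (-N)..N, G (x + (b:ℂ) * Complex.I))
     - Complex.I • (∫ y : ℝ in s..b, G ((N:ℂ) + y * Complex.I))
     + Complex.I • (∫ y : ℝ in s..b, G (((-N:ℝ):ℂ) + y * Complex.I)) := by
    linear_combination hrect
  rw [key]
  have e5 : N ^ (-(p-1)) = N ^ (-p) * N := by
    rw [← Real.rpow_add_one hN.ne']; congr 1; ring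
  have hNN : |N - (-N)| = 2 * N := by rw [abs_of_pos] <;> linarith
  have hbs : |b - s| = 2 * N := by rw [hbdef, abs_of_pos] <;> linarith
  rw [hNN] at e1
  rw [hbs] at e3 e4
  refine (norm_add_le _ _).trans ?_
  refine (add_le_add (norm_sub_le _ _) le_rfl).trans ?_
  rw [norm_smul, norm_smul, Complex.norm_I, one_mul, one_mul, e5]
  refine (add_le_add (add_le_add e1 e3) e4).trans (le_of_eq ?_)
  ring

def BC {E V : Type*} [NormedAddCommGroup E] [MeasurableSpace E] [NormedAddCommGroup V] [MeasurableSpace V]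
    (f : E → V) : Prop :=
  Measurable f ∧ (∃ B, ∀ x, ‖f x‖ ≤ B) ∧ ∃ R, ∀ x, R < ‖x‖ → f x = 0

lemma BC.integrable {E V : Type*} [NormedAddCommGroup E] [MeasurableSpace E] [BorelSpace E] [ProperSpace E]
    [NormedAddCommGroup V] [MeasurableSpace V] [BorelSpace V] [SecondCountableTopology V]
    {f : E → V} (hf : BC f) (μ : Measure E) [IsFiniteMeasureOnCompacts μ] : Integrable f μ := by
  obtain ⟨hm, ⟨B, hB⟩, R, hR⟩ := hf
  have hsupp : Function.support f ⊆ closedBall 0 R := by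
    intro x hx
    by_contra h
    exact hx (hR x (by simpa using h))
  rw [← integrableOn_iff_integrable_of_support_subset hsupp]
  exact Measure.integrableOn_of_bounded (isCompact_closedBall _ _).measure_lt_top.ne
    hm.aestronglyMeasurable (M := B) (Eventually.of_forall fun x => hB x)

lemma BC.ofReal {f : ℝ → ℝ} (hf : BC f) : BC (fun y => (f y : ℂ)) := by
  obtain ⟨hm, ⟨B, hB⟩, R, hR⟩ := hf
  exact ⟨by fun_prop, ⟨B, fun x => by simpa using hB x⟩, R, fun x hx => by simp [hR x hx]⟩

def CT (f : ℝ → ℂ) (z : ℂ) : ℂ := ∫ y : ℝ, f y / (z - y)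

lemma im_le_norm_sub (z : ℂ) (y : ℝ) : z.im ≤ ‖z - y‖ := by
  have := (le_abs_self _).trans (Complex.abs_im_le_norm (z - y))
  simpa using this

lemma CT_integrable {f : ℝ → ℂ} (hf : Integrable f) {z : ℂ} (hz : 0 < z.im) :
    Integrable (fun y : ℝ => f y / (z - y)) := by
  have h1 : Integrable (fun y => z.im⁻¹ * ‖f y‖) := hf.norm.const_mul _
  refine h1.mono' ?_ (Eventually.of_forall fun y => ?_)
  · refine hf.aestronglyMeasurable.div₀ ?_
    exact (by fun_prop : Continuous (fun y : ℝ => z - (y:ℂ))).aestronglyMeasurable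
  · rw [norm_div, div_eq_inv_mul]
    gcongr
    exact im_le_norm_sub z y

lemma CT_bound {f : ℝ → ℂ} (hf : BC f) {s : ℝ} (hs : 0 < s) :
    ∃ C, 0 ≤ C ∧ ∀ z : ℂ, s ≤ z.im → ‖CT f z‖ ≤ C * (1 + ‖z‖)⁻¹ := by
  have hint := hf.integrable volume
  obtain ⟨hm, ⟨B, hB⟩, R, hR⟩ := hf
  set A := (1 + |R|) / s + 1 with hA
  have hA0 : 0 < A := by positivity
  refine ⟨A * ∫ y, ‖f y‖, by positivity, fun z hz => ?_⟩
  refine (norm_integral_le_integral_norm _).trans ?_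
  rw [mul_right_comm, ← integral_const_mul]
  apply integral_mono (CT_integrable hint (hs.trans_le hz)).norm (hint.norm.const_mul _)
  intro y
  simp only
  rw [norm_div]
  by_cases hy : R < ‖y‖
  · rw [hR y hy]; simp
  push Not at hy
  have h1 : s ≤ ‖z - y‖ := hz.trans (im_le_norm_sub z y)
  have h2 : ‖z‖ ≤ ‖z - y‖ + |R| := by
    have := norm_add_le (z - y) (y:ℂ)
    rw [sub_add_cancel, Complex.norm_real] at this
    linarith [le_abs_self R]
  rw [div_eq_mul_inv, mul_comm]
  gcongr
  rw [← div_eq_mul_inv, inv_eq_one_div, div_le_div_iff₀ (hs.trans_le h1) (by positivity), hA, add_mul, one_mul]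
  have : 1 + |R| ≤ (1 + |R|)/s * ‖z - y‖ := by
    rw [div_mul_eq_mul_div, le_div_iff₀ hs]; gcongr
  linarith

lemma CT_differentiableOn {f : ℝ → ℂ} (hf : Integrable f) : DifferentiableOn ℂ (CT f) {z | 0 < z.im} := by
  intro z0 hz0
  have hz0 : 0 < z0.im := hz0
  have hball : ∀ z ∈ ball z0 (z0.im/2), z0.im/2 < z.im := by
    intro z hz
    have := (Complex.abs_im_le_norm (z - z0)).trans_lt (by simpa [dist_eq_norm] using hz)
    rw [abs_lt, Complex.sub_im] at this
    linarith [this.1]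
  have := hasDerivAt_integral_of_dominated_loc_of_deriv_le (μ := volume) (F := fun z (y:ℝ) => f y / (z - y))
    (F' := fun z (y:ℝ) => - f y / (z - y)^2) (x₀ := z0) (s := ball z0 (z0.im/2))
    (bound := fun y => ((z0.im/2)^2)⁻¹ * ‖f y‖) (ball_mem_nhds _ (by positivity))
    (by
      filter_upwards [ball_mem_nhds z0 (show 0 < z0.im/2 by positivity)] with z hz
      exact (CT_integrable hf ((half_pos hz0).trans (hball z hz))).aestronglyMeasurable)
    (CT_integrable hf hz0)
    (by
      refine hf.aestronglyMeasurable.neg.div₀ ?_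
      exact (by fun_prop : Continuous (fun y : ℝ => (z0 - (y:ℂ))^2)).aestronglyMeasurable)
    (by
      refine Eventually.of_forall fun y z hz => ?_
      rw [norm_div, div_eq_inv_mul, norm_neg, norm_pow]
      gcongr
      exact (hball z hz).le.trans (im_le_norm_sub z y))
    (hf.norm.const_mul _)
    (by
      refine Eventually.of_forall fun y z hz => ?_
      have h0 : z - (y:ℂ) ≠ 0 := by
        have := ((half_pos hz0).trans (hball z hz)).trans_le (im_le_norm_sub z y)
        exact norm_pos_iff.1 this
      have h1 := ((hasDerivAt_id z).sub_const (y:ℂ)).inv h0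
      have h2 := h1.const_mul (f y)
      simp only [id] at h2
      refine (h2.congr_deriv ?_)
      ring)
  exact this.2.differentiableAt.differentiableWithinAt

lemma CT_eq {f : ℝ → ℝ} (hf : BC f) {s : ℝ} (hs : 0 < s) (x : ℝ) :
    CT (fun y => (f y : ℂ)) (x + s * Complex.I) =
      (∫ y, qk s (x - y) * f y : ℝ) - (∫ y, pk s (x - y) * f y : ℝ) * Complex.I := by
  have hint : Integrable (fun y : ℝ => (f y:ℂ) / ((x + s * Complex.I) - y)) :=
    CT_integrable (hf.ofReal.integrable volume) (by simpa using hs)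
  have key : ∀ y : ℝ, (f y:ℂ) / ((x + s * Complex.I) - y) = (qk s (x-y) * f y : ℝ) - (pk s (x-y) * f y : ℝ) * Complex.I := by
    intro y
    have h1 : (x + s * Complex.I - (y:ℂ)) ≠ 0 := by
      intro h
      have := congrArg Complex.im h
      simp at this
      exact hs.ne' this
    have h2 : ((s:ℂ)^2 + ((x:ℂ)-y)^2) ≠ 0 := by
      have : s^2 + (x-y)^2 ≠ 0 := by positivity
      exact_mod_cast this
    rw [div_eq_iff h1]
    unfold qk pk
    push_cast
    field_simp
    linear_combination ((f y:ℂ) * s^2) * Complex.I_sq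
  have hre := hint.re
  have him := hint.im
  apply Complex.ext
  · have := integral_re hint
    simp only [RCLike.re_to_complex] at this
    unfold CT
    rw [← this]
    simp only [key]
    simp
  · have := integral_im hint
    simp only [RCLike.im_to_complex] at this
    unfold CT
    rw [← this]
    simp only [key]
    simp [integral_neg]

end P3
end NT

namespace NT
section P4


lemma ptw (p : ℝ) (hp : 1 < p) (hp2 : p ≤ 2) : ∃ A B : ℝ, 0 ≤ A ∧ 0 ≤ B ∧ ∀ z : ℂ, 0 < z.re →
    ‖z‖ ^ p ≤ A * z.re ^ p - B * (z ^ (p:ℂ)).re := by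
  have hpi := Real.pi_pos
  set θ₀ : ℝ := (π/2 + π/(2*p))/2 with hθ
  have hlt : π/(2*p) < π/2 := by
    apply div_lt_div_of_pos_left hpi (by norm_num); linarith
  have h1 : θ₀ < π/2 := by rw [hθ]; linarith
  have h1' : 0 < θ₀ := by rw [hθ]; positivity
  have h2 : π/2 < p * θ₀ := by
    have : p * (π/(2*p)) = π/2 := by field_simp
    have h3 : π/(2*p) < θ₀ := by rw [hθ]; linarith
    have := mul_lt_mul_of_pos_left h3 (show 0 < p by linarith)
    linarith
  have h3 : p * θ₀ ≤ π := by nlinarith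
  set δ := - Real.cos (p*θ₀) with hδ
  have hδ0 : 0 < δ := by
    have := Real.cos_neg_of_pi_div_two_lt_of_lt h2 (by linarith)
    linarith
  set m := Real.cos θ₀ with hm
  have hm0 : 0 < m := Real.cos_pos_of_mem_Ioo ⟨by linarith, h1⟩
  refine ⟨(1 + δ⁻¹) * (m ^ p)⁻¹, δ⁻¹, by positivity, by positivity, ?_⟩
  intro z hz
  have hz0 : z ≠ 0 := by rintro rfl; simp at hz
  have hn : 0 < ‖z‖ := norm_pos_iff.2 hz0
  rw [Complex.cpow_ofReal_re]
  have hre : z.re = ‖z‖ * Real.cos (Complex.arg z) := by rw [Complex.norm_mul_cos_arg]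
  have harg : |Complex.arg z| < π/2 := Complex.abs_arg_lt_pi_div_two_iff.2 (Or.inl hz)
  set φ := |Complex.arg z| with hφ
  have hφ0 : 0 ≤ φ := abs_nonneg _
  have c1 : Real.cos (Complex.arg z) = Real.cos φ := (Real.cos_abs _).symm
  have c2 : Real.cos (Complex.arg z * p) = Real.cos (p * φ) := by
    rw [← Real.cos_abs, abs_mul, abs_of_pos (show 0 < p by linarith), mul_comm]
  rw [hre, c1, c2]
  have hc0 : 0 < Real.cos φ := Real.cos_pos_of_mem_Ioo ⟨by linarith, harg⟩
  rw [Real.mul_rpow hn.le hc0.le]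
  have hnp : 0 < ‖z‖^p := by positivity
  have main : 1 ≤ (1 + δ⁻¹) * (m ^ p)⁻¹ * (Real.cos φ)^p - δ⁻¹ * Real.cos (p*φ) := by
    by_cases hc : φ ≤ θ₀
    · have : m ≤ Real.cos φ := Real.cos_le_cos_of_nonneg_of_le_pi hφ0 (by linarith) hc
      have h5 : m^p ≤ (Real.cos φ)^p := Real.rpow_le_rpow hm0.le this (by linarith)
      have h6 : 1 ≤ (m ^ p)⁻¹ * (Real.cos φ)^p := by
        rw [← div_eq_inv_mul, le_div_iff₀ (by positivity)]; linarith
      have h7 := Real.cos_le_one (p*φ)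
      have h8 : 0 < δ⁻¹ := by positivity
      have : (1 + δ⁻¹) * 1 ≤ (1 + δ⁻¹) * ((m ^ p)⁻¹ * (Real.cos φ)^p) := by gcongr
      nlinarith
    · push Not at hc
      have : Real.cos (p*φ) ≤ Real.cos (p*θ₀) := by
        apply Real.cos_le_cos_of_nonneg_of_le_pi (by positivity)
        · nlinarith
        · gcongr
      have h9 : Real.cos (p*φ) ≤ -δ := by linarith
      have h10 : 0 ≤ (1 + δ⁻¹) * (m ^ p)⁻¹ * (Real.cos φ)^p := by positivity
      have h11 : δ⁻¹ * Real.cos (p*φ) ≤ δ⁻¹ * (-δ) := by gcongr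
      have h12 : δ⁻¹ * (-δ) = -1 := by field_simp
      linarith
  calc ‖z‖^p = ‖z‖^p * 1 := by ring
    _ ≤ ‖z‖^p * ((1 + δ⁻¹) * (m ^ p)⁻¹ * (Real.cos φ)^p - δ⁻¹ * Real.cos (p*φ)) := by gcongr
    _ = _ := by ring

lemma abs_pk_le {s : ℝ} (hs : 0 < s) (r : ℝ) : |pk s r| ≤ s⁻¹ := by
  rw [abs_of_nonneg (pk_nonneg hs r), pk, div_le_iff₀ (by positivity)]
  have : s = s⁻¹ * s^2 := by field_simp
  nlinarith [mul_nonneg (inv_pos.2 hs).le (sq_nonneg r)]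

lemma abs_qk_le {s : ℝ} (hs : 0 < s) (r : ℝ) : |qk s r| ≤ s⁻¹ := by
  rw [qk, abs_div, abs_of_pos (show 0 < s^2+r^2 by positivity), div_le_iff₀ (by positivity),
    inv_mul_eq_div, le_div_iff₀ hs]
  nlinarith [sq_abs r, sq_nonneg (|r| - s), sq_nonneg (|r|+s)]

lemma BC.bdd_mul {E : Type*} [NormedAddCommGroup E] [MeasurableSpace E] {f g : E → ℝ} (hf : BC f)
    (hg : Measurable g) {M : ℝ} (hM : ∀ x, |g x| ≤ M) : BC (fun x => g x * f x) := by
  obtain ⟨hm, ⟨B, hB⟩, R, hR⟩ := hf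
  refine ⟨hg.mul hm, ⟨M * B, fun x => ?_⟩, R, fun x hx => by simp [hR x hx]⟩
  rw [norm_mul]
  have := hM x
  exact mul_le_mul this (hB x) (norm_nonneg _) ((abs_nonneg _).trans this)

lemma BC.pk_mul {f : ℝ → ℝ} (hf : BC f) {s : ℝ} (hs : 0 < s) (x : ℝ) : BC (fun y => pk s (x - y) * f y) :=
  hf.bdd_mul ((continuous_pk hs).measurable.comp (measurable_const.sub measurable_id)) (fun y => abs_pk_le hs (x - y))

lemma BC.qk_mul {f : ℝ → ℝ} (hf : BC f) {s : ℝ} (hs : 0 < s) (x : ℝ) : BC (fun y => qk s (x - y) * f y) :=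
  hf.bdd_mul ((continuous_qk hs).measurable.comp (measurable_const.sub measurable_id)) (fun y => abs_qk_le hs (x - y))

lemma ofReal_pois {f : ℝ → ℝ} (hf : BC f) (h0 : ∀ y, 0 ≤ f y) {s : ℝ} (hs : 0 < s) (x : ℝ) :
    ENNReal.ofReal (∫ y, pk s (x - y) * f y) = ∫⁻ y, ENNReal.ofReal (pk s (x - y)) * ENNReal.ofReal (f y) := by
  rw [ofReal_integral_eq_lintegral_ofReal ((hf.pk_mul hs x).integrable volume)
    (Eventually.of_forall fun y => mul_nonneg (pk_nonneg hs _) (h0 y))]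
  congr 1; funext y
  rw [ENNReal.ofReal_mul (pk_nonneg hs _)]

lemma BC.abs {E : Type*} [NormedAddCommGroup E] [MeasurableSpace E] {f : E → ℝ} (hf : BC f) : BC (fun x => |f x|) := by
  obtain ⟨hm, ⟨B, hB⟩, R, hR⟩ := hf
  exact ⟨by fun_prop, ⟨B, fun x => by simpa using hB x⟩, R, fun x hx => by simp [hR x hx]⟩

/-- Poisson bound for all p -/
lemma pois_Lp (p : ℝ) (hp : 1 < p) : ∃ C : ℝ≥0, ∀ f : ℝ → ℝ, BC f → ∀ s : ℝ, 0 < s →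
    ∫⁻ x, ‖∫ y, pk s (x - y) * f y‖ₑ ^ p ≤ C * ∫⁻ x, ‖f x‖ₑ ^ p := by
  obtain ⟨C, hC⟩ := HLM_strong p hp
  refine ⟨32 ^ p * C, fun f hf s hs => ?_⟩
  have hf' := hf.abs
  obtain ⟨hm, ⟨B, hB⟩, R, hR⟩ := hf
  have h1 := hC (fun x => |f x|) (by fun_prop) (fun x => abs_nonneg _) ⟨B, hB⟩
  have e : ∀ x, ENNReal.ofReal |f x| = ‖f x‖ₑ := fun x => (Real.enorm_eq_ofReal_abs _).symm
  simp only [e] at h1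
  calc ∫⁻ x, ‖∫ y, pk s (x - y) * f y‖ₑ ^ p ≤ ∫⁻ x, (32 * HLM (fun y => ‖f y‖ₑ) x) ^ p := by
        apply lintegral_mono; intro x
        simp only
        gcongr
        refine le_trans ?_ (pois_le (by fun_prop) hs x)
        refine (enorm_integral_le_lintegral_enorm _).trans ?_
        apply lintegral_mono; intro y
        simp only
        rw [enorm_mul, Real.enorm_of_nonneg (pk_nonneg hs _)]
    _ = 32 ^ p * ∫⁻ x, (HLM (fun y => ‖f y‖ₑ) x) ^ p := by
        rw [← lintegral_const_mul' _ _ (by simp)]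
        congr 1; funext x
        rw [ENNReal.mul_rpow_of_nonneg _ _ (by linarith)]
    _ ≤ _ := by
        rw [ENNReal.coe_mul, ENNReal.coe_rpow_of_nonneg _ (by linarith), mul_assoc]
        push_cast
        gcongr

lemma CT_Lp_pos (p : ℝ) (hp : 1 < p) (hp2 : p ≤ 2) : ∃ C : ℝ≥0, ∀ f : ℝ → ℝ, BC f → (∀ y, 0 ≤ f y) → ∀ s : ℝ, 0 < s →
    ∫⁻ x : ℝ, ‖CT (fun y => (f y : ℂ)) (x + s * Complex.I)‖ₑ ^ p ≤ C * ∫⁻ x, ‖f x‖ₑ ^ p := by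
  obtain ⟨C, hC⟩ := pois_Lp p hp
  obtain ⟨A, B, hA, hB, hAB⟩ := ptw p hp hp2
  refine ⟨A.toNNReal * C, fun f hf h0 s hs => ?_⟩
  have hfi := hf.integrable volume
  by_cases hz : f =ᵐ[volume] 0
  · have : ∀ z, CT (fun y => (f y : ℂ)) z = 0 := by
      intro z
      apply integral_eq_zero_of_ae
      filter_upwards [hz] with y hy
      simp [hy]
    simp [this, show 0 < p by linarith]
  set W : ℂ → ℂ := fun z => Complex.I * CT (fun y => (f y : ℂ)) z with hW
  have hWre : ∀ (x t : ℝ), 0 < t → (W (x + t * Complex.I)).re = ∫ y, pk t (x - y) * f y := by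
    intro x t ht
    simp only [hW]
    rw [CT_eq hf ht]
    simp
  have hpos : ∀ (x t : ℝ), 0 < t → 0 < ∫ y, pk t (x - y) * f y := by
    intro x t ht
    have hnn : 0 ≤ fun y => pk t (x - y) * f y := fun y => mul_nonneg (pk_nonneg ht _) (h0 y)
    refine lt_of_le_of_ne (integral_nonneg hnn) (fun h => hz ?_)
    have := (integral_eq_zero_iff_of_nonneg hnn ((hf.pk_mul ht x).integrable volume)).1 h.symm
    filter_upwards [this] with y hy
    have hy : pk t (x - y) * f y = 0 := hy
    exact (mul_eq_zero.1 hy).resolve_left (pk_pos ht _).ne'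
  have hWpos : ∀ z : ℂ, 0 < z.im → 0 < (W z).re := by
    intro z hz
    have := hWre z.re z.im hz
    rw [Complex.re_add_im] at this
    rw [this]; exact hpos _ _ hz
  obtain ⟨D, hD, hDb⟩ := CT_bound hf.ofReal hs
  have hcl := cauchy_line (fun z => W z ^ (p:ℂ)) s (D^p) p hp
    (by
      have h1 : DifferentiableOn ℂ W {z | s ≤ z.im} :=
        ((CT_differentiableOn (hf.ofReal.integrable volume)).const_mul _).mono (fun z hz => lt_of_lt_of_le hs hz)
      exact h1.cpow_const (fun z hz => Or.inl (hWpos z (lt_of_lt_of_le hs hz))))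
    (by
      intro z hz
      rw [Complex.norm_cpow_real]
      rw [Real.rpow_neg (by positivity), ← Real.inv_rpow (by positivity), ← Real.mul_rpow hD (by positivity)]
      apply Real.rpow_le_rpow (norm_nonneg _) _ (by linarith)
      simpa [hW] using hDb z hz)
  obtain ⟨hGi, hG0⟩ := hcl
  set u : ℝ → ℝ := fun x => ∫ y, pk s (x - y) * f y with hu
  have hWn : ∀ x : ℝ, ‖W (x + s * Complex.I)‖ = ‖CT (fun y => (f y : ℂ)) (x + s * Complex.I)‖ := by
    intro x; simp [hW]
  have hnormi : Integrable (fun x : ℝ => ‖W (x + s * Complex.I)‖ ^ p) := by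
    have := hGi.norm
    simpa only [Complex.norm_cpow_real] using this
  have hWcont : Continuous (fun x : ℝ => W (x + s * Complex.I)) := by
    rw [← continuousOn_univ]
    have h1 : DifferentiableOn ℂ W {z | 0 < z.im} :=
        ((CT_differentiableOn (hf.ofReal.integrable volume)).const_mul _)
    exact h1.continuousOn.comp (by fun_prop) (fun x _ => by simpa using hs)
  have hucont : Continuous u := by
    have : u = fun x : ℝ => (W (x + s * Complex.I)).re := by
      funext x; rw [hWre x s hs]
    rw [this]; exact Complex.continuous_re.comp hWcont
  have hu0 : ∀ x, 0 ≤ u x := fun x => (hpos x s hs).le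
  have hui : Integrable (fun x => u x ^ p) := by
    refine hnormi.mono' ?_ (Eventually.of_forall fun x => ?_)
    · exact (hucont.measurable.pow_const p).aestronglyMeasurable
    · rw [Real.norm_of_nonneg (Real.rpow_nonneg (hu0 x) _)]
      apply Real.rpow_le_rpow (hu0 x) _ (by linarith)
      rw [hu]; simp only
      rw [← hWre x s hs]; exact Complex.re_le_norm _
  have hre : ∫ x : ℝ, ((W (x + s * Complex.I)) ^ (p:ℂ)).re = 0 := by
    have := integral_re hGi
    simp only [RCLike.re_to_complex] at this
    rw [this, hG0]; simp
  have hGre : Integrable (fun x : ℝ => ((W (x + s * Complex.I)) ^ (p:ℂ)).re) := hGi.re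
  have hI : ∫ x : ℝ, ‖W (x + s * Complex.I)‖ ^ p ≤ A * ∫ x, u x ^ p := by
    have h1 : ∫ x : ℝ, ‖W (x + s * Complex.I)‖ ^ p ≤
        ∫ x : ℝ, (A * u x ^ p - B * ((W (x + s * Complex.I)) ^ (p:ℂ)).re) := by
      apply integral_mono hnormi ((hui.const_mul A).sub (hGre.const_mul B))
      intro x
      have := hAB (W (x + s * Complex.I)) (hWpos _ (by simpa using hs))
      rw [hWre x s hs] at this
      exact this
    rw [integral_sub (hui.const_mul A) (hGre.const_mul B), integral_const_mul, integral_const_mul] at h1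
    rw [hre] at h1
    simpa using h1
  have hconv : ∀ a : ℝ, 0 ≤ a → ENNReal.ofReal (a ^ p) = ENNReal.ofReal a ^ p :=
    fun a ha => (ENNReal.ofReal_rpow_of_nonneg ha (by linarith)).symm
  calc ∫⁻ x : ℝ, ‖CT (fun y => (f y : ℂ)) (x + s * Complex.I)‖ₑ ^ p
      = ∫⁻ x : ℝ, ENNReal.ofReal (‖W (x + s * Complex.I)‖ ^ p) := by
        congr 1; funext x
        rw [hconv _ (norm_nonneg _), hWn, ofReal_norm]
    _ = ENNReal.ofReal (∫ x : ℝ, ‖W (x + s * Complex.I)‖ ^ p) :=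
        (ofReal_integral_eq_lintegral_ofReal hnormi (Eventually.of_forall fun x => by positivity)).symm
    _ ≤ ENNReal.ofReal (A * ∫ x, u x ^ p) := ENNReal.ofReal_le_ofReal hI
    _ = ENNReal.ofReal A * ∫⁻ x, ‖u x‖ₑ ^ p := by
        rw [ENNReal.ofReal_mul hA, ofReal_integral_eq_lintegral_ofReal hui (Eventually.of_forall fun x => Real.rpow_nonneg (hu0 x) _)]
        congr 2; funext x
        rw [hconv _ (hu0 x), Real.enorm_of_nonneg (hu0 x)]
    _ ≤ _ := by
        rw [ENNReal.coe_mul, mul_assoc]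
        exact mul_le_mul_right (hC f hf s hs) _

end P4
end NT

namespace NT
section P5


lemma enorm_sub_rpow_le {V : Type*} [NormedAddCommGroup V] (a b : V) {p : ℝ} (hp : 1 ≤ p) :
    ‖a - b‖ₑ ^ p ≤ (2:ℝ≥0∞) ^ (p - 1) * (‖a‖ₑ ^ p + ‖b‖ₑ ^ p) := by
  refine (ENNReal.rpow_le_rpow (enorm_sub_le (a := a) (b := b)) (by linarith)).trans ?_
  exact ENNReal.rpow_add_le_mul_rpow_add_rpow _ _ hp

lemma CT_Lp_low (p : ℝ) (hp : 1 < p) (hp2 : p ≤ 2) : ∃ C : ℝ≥0, ∀ f : ℝ → ℝ, BC f → ∀ s : ℝ, 0 < s →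
    ∫⁻ x : ℝ, ‖CT (fun y => (f y : ℂ)) (x + s * Complex.I)‖ₑ ^ p ≤ C * ∫⁻ x, ‖f x‖ₑ ^ p := by
  obtain ⟨C, hC⟩ := CT_Lp_pos p hp hp2
  refine ⟨2 ^ (p-1) * (C + C), fun f hf s hs => ?_⟩
  have hfp : BC (fun x => max (f x) 0) := by
    obtain ⟨hm, ⟨B, hB⟩, R, hR⟩ := hf
    refine ⟨by fun_prop, ⟨B, fun x => ?_⟩, R, fun x hx => by simp [hR x hx]⟩
    refine le_trans ?_ (hB x)
    rw [Real.norm_of_nonneg (le_max_right _ _)]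
    exact max_le (le_abs_self _) (abs_nonneg _)
  have hfm : BC (fun x => max (-f x) 0) := by
    obtain ⟨hm, ⟨B, hB⟩, R, hR⟩ := hf
    refine ⟨by fun_prop, ⟨B, fun x => ?_⟩, R, fun x hx => by simp [hR x hx]⟩
    refine le_trans ?_ (hB x)
    rw [Real.norm_of_nonneg (le_max_right _ _)]
    exact max_le (neg_le_abs _) (abs_nonneg _)
  have hle1 : ∀ x, ‖max (f x) 0‖ₑ ≤ ‖f x‖ₑ := fun x => by
    rw [enorm_le_iff_norm_le, Real.norm_of_nonneg (le_max_right _ _)]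
    exact max_le (le_abs_self _) (abs_nonneg _)
  have hle2 : ∀ x, ‖max (-f x) 0‖ₑ ≤ ‖f x‖ₑ := fun x => by
    rw [enorm_le_iff_norm_le, Real.norm_of_nonneg (le_max_right _ _)]
    exact max_le (neg_le_abs _) (abs_nonneg _)
  have hsplit : ∀ z : ℂ, 0 < z.im → CT (fun y => (f y : ℂ)) z =
      CT (fun y => ((max (f y) 0 : ℝ) : ℂ)) z - CT (fun y => ((max (-f y) 0 : ℝ) : ℂ)) z := by
    intro z hz
    unfold CT
    rw [← integral_sub (CT_integrable (hfp.ofReal.integrable volume) hz) (CT_integrable (hfm.ofReal.integrable volume) hz)]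
    congr 1; funext y
    rw [← sub_div]
    rw [← Complex.ofReal_sub]
    congr 1
    rcases le_total (f y) 0 with h | h <;> simp [h]
  have hmeas : Measurable fun x : ℝ => ‖CT (fun y => ((max (f y) 0 : ℝ) : ℂ)) (x + s * Complex.I)‖ₑ ^ p := by
    have h1 := (CT_differentiableOn (hfp.ofReal.integrable volume)).continuousOn
    have : Continuous (fun x : ℝ => CT (fun y => ((max (f y) 0 : ℝ) : ℂ)) (x + s * Complex.I)) := by
      rw [← continuousOn_univ]
      exact h1.comp (by fun_prop) (fun x _ => by simpa using hs)
    exact this.measurable.enorm.pow_const p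
  calc ∫⁻ x : ℝ, ‖CT (fun y => (f y : ℂ)) (x + s * Complex.I)‖ₑ ^ p
      ≤ ∫⁻ x : ℝ, (2:ℝ≥0∞) ^ (p - 1) * (‖CT (fun y => ((max (f y) 0 : ℝ) : ℂ)) (x + s * Complex.I)‖ₑ ^ p
        + ‖CT (fun y => ((max (-f y) 0 : ℝ) : ℂ)) (x + s * Complex.I)‖ₑ ^ p) := by
        apply lintegral_mono; intro x
        simp only
        rw [hsplit _ (by simpa using hs)]
        exact enorm_sub_rpow_le _ _ hp.le
    _ = (2:ℝ≥0∞) ^ (p - 1) * ((∫⁻ x : ℝ, ‖CT (fun y => ((max (f y) 0 : ℝ) : ℂ)) (x + s * Complex.I)‖ₑ ^ p)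
        + ∫⁻ x : ℝ, ‖CT (fun y => ((max (-f y) 0 : ℝ) : ℂ)) (x + s * Complex.I)‖ₑ ^ p) := by
        rw [lintegral_const_mul' _ _ (by finiteness), lintegral_add_left hmeas]
    _ ≤ (2:ℝ≥0∞) ^ (p - 1) * (C * (∫⁻ x, ‖f x‖ₑ ^ p) + C * ∫⁻ x, ‖f x‖ₑ ^ p) := by
        gcongr
        · refine (hC _ hfp (fun y => le_max_right _ _) s hs).trans ?_
          gcongr; apply hle1
        · refine (hC _ hfm (fun y => le_max_right _ _) s hs).trans ?_
          gcongr; apply hle2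
    _ = _ := by
        rw [ENNReal.coe_mul, ENNReal.coe_rpow_of_nonneg _ (by linarith)]
        push_cast; ring

lemma continuous_CT {f : ℝ → ℂ} (hf : Integrable f) {s : ℝ} (hs : 0 < s) :
    Continuous (fun x : ℝ => CT f (x + s * Complex.I)) := by
  rw [← continuousOn_univ]
  exact (CT_differentiableOn hf).continuousOn.comp (by fun_prop) (fun x _ => by simpa using hs)

lemma continuous_Q {f : ℝ → ℝ} (hf : BC f) {s : ℝ} (hs : 0 < s) :
    Continuous (fun x : ℝ => ∫ y, qk s (x - y) * f y) := by
  have h := Complex.continuous_re.comp (continuous_CT (hf.ofReal.integrable volume) hs)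
  convert h using 2 with x
  simp only [Function.comp]
  rw [CT_eq hf hs]; simp

lemma Q_le_CT {f : ℝ → ℝ} (hf : BC f) {s : ℝ} (hs : 0 < s) (x : ℝ) :
    ‖∫ y, qk s (x - y) * f y‖ₑ ≤ ‖CT (fun y => (f y : ℂ)) (x + s * Complex.I)‖ₑ := by
  rw [enorm_le_iff_norm_le, CT_eq hf hs]
  refine le_trans ?_ (Complex.abs_re_le_norm _)
  simp

lemma Q_bdd {f : ℝ → ℝ} (hf : BC f) {s : ℝ} (hs : 0 < s) :
    ∃ B, ∀ x, |∫ y, qk s (x - y) * f y| ≤ B := by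
  refine ⟨∫ y, s⁻¹ * ‖f y‖, fun x => ?_⟩
  rw [← Real.norm_eq_abs]
  refine norm_integral_le_of_norm_le ((hf.integrable volume).norm.const_mul _) (Eventually.of_forall fun y => ?_)
  rw [norm_mul]
  gcongr
  exact abs_qk_le hs _

lemma Q_swap {f h : ℝ → ℝ} (hf : BC f) (hh : BC h) {s : ℝ} (hs : 0 < s) :
    ∫ x, h x * ∫ y, qk s (x - y) * f y = - ∫ y, f y * ∫ x, qk s (y - x) * h x := by
  have hi : Integrable (fun z : ℝ × ℝ => qk s (z.1 - z.2) * (h z.1 * f z.2)) (volume.prod volume) := by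
    refine Integrable.bdd_mul (c := s⁻¹) ((hh.integrable volume).mul_prod (hf.integrable volume)) ?_ (Eventually.of_forall fun z => abs_qk_le hs _)
    exact ((continuous_qk hs).comp (by fun_prop : Continuous fun z : ℝ × ℝ => z.1 - z.2)).aestronglyMeasurable
  have := integral_integral_swap (f := fun x y => qk s (x - y) * (h x * f y)) hi
  calc ∫ x, h x * ∫ y, qk s (x - y) * f y = ∫ x, ∫ y, qk s (x - y) * (h x * f y) := by
        congr 1; funext x; rw [← integral_const_mul]; congr 1; funext y; ring
    _ = ∫ y, ∫ x, qk s (x - y) * (h x * f y) := this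
    _ = _ := by
        rw [← integral_neg]
        congr 1; funext y; rw [← integral_const_mul, ← integral_neg]; congr 1; funext x
        have : qk s (x - y) = - qk s (y - x) := by
          unfold qk; rw [← neg_div, neg_sub]; congr 1; ring
        rw [this]; ring

lemma Q_Lp_high (p : ℝ) (hp : 2 < p) : ∃ C : ℝ≥0, ∀ f : ℝ → ℝ, BC f → ∀ s : ℝ, 0 < s →
    ∫⁻ x : ℝ, ‖∫ y, qk s (x - y) * f y‖ₑ ^ p ≤ C * ∫⁻ x, ‖f x‖ₑ ^ p := by
  set q : ℝ := p / (p - 1) with hq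
  have hpq : p.HolderConjugate q := Real.HolderConjugate.conjExponent (by linarith)
  have hq2 : q ≤ 2 := by rw [hq, div_le_iff₀ (by linarith)]; linarith
  obtain ⟨C, hC⟩ := CT_Lp_low q hpq.symm.lt hq2
  refine ⟨C ^ (p/q), fun f hf s hs => ?_⟩
  set g : ℝ → ℝ := fun x => ∫ y, qk s (x - y) * f y with hg
  have hgc : Continuous g := continuous_Q hf hs
  obtain ⟨B, hB⟩ := Q_bdd hf hs
  have hB0 : 0 ≤ B := (abs_nonneg _).trans (hB 0)
  have key : ∀ N : ℕ, ∫⁻ x in closedBall (0:ℝ) N, ‖g x‖ₑ ^ p ≤ (C ^ (p/q) : ℝ≥0) * ∫⁻ x, ‖f x‖ₑ ^ p := by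
    intro N
    set h : ℝ → ℝ := (closedBall (0:ℝ) N).indicator (fun x => g x * |g x| ^ (p - 2)) with hh
    have hhm : Measurable h := by
      apply Measurable.indicator _ measurableSet_closedBall
      have := hgc.measurable
      fun_prop
    have hgp : ∀ x, |g x * |g x| ^ (p - 2)| = |g x| ^ (p - 1) := by
      intro x
      rw [abs_mul, abs_of_nonneg (Real.rpow_nonneg (abs_nonneg _) _)]
      rw [← Real.rpow_one_add' (abs_nonneg _) (by linarith)]; congr 1; ring
    have hhBC : BC h := by
      refine ⟨hhm, ⟨B ^ (p-1), fun x => ?_⟩, N, fun x hx => ?_⟩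
      · rw [hh, Set.indicator]
        split_ifs
        · rw [Real.norm_eq_abs, hgp]
          exact Real.rpow_le_rpow (abs_nonneg _) (hB x) (by linarith)
        · simp only [norm_zero]; positivity
      · rw [hh, Set.indicator_of_notMem]
        simpa using hx
    have hq0 : 0 < q := hpq.symm.pos
    have hp0 : 0 < p := hpq.pos
    set X := ∫⁻ x in closedBall (0:ℝ) N, ‖g x‖ₑ ^ p with hX
    have hXh : X = ∫⁻ x, ‖h x‖ₑ ^ q := by
      rw [hX, ← lintegral_indicator measurableSet_closedBall]
      congr 1; funext x
      rw [hh, Set.indicator, Set.indicator]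
      split_ifs
      · have e : ‖g x * |g x| ^ (p-2)‖ₑ = ‖g x‖ₑ ^ (p-1) := by
          rw [Real.enorm_eq_ofReal_abs, hgp, Real.enorm_eq_ofReal_abs, ENNReal.ofReal_rpow_of_nonneg (abs_nonneg _) (by linarith)]
        rw [e, ← ENNReal.rpow_mul]
        congr 1
        rw [hq]; field_simp [show p - 1 ≠ 0 by linarith]
      · simp [hq0]
    have hhg : ∀ x, ‖h x‖ₑ ^ q = ENNReal.ofReal (h x * g x) := by
      intro x
      rw [hh, Set.indicator]
      split_ifs
      · have e : ‖g x * |g x| ^ (p-2)‖ₑ = ‖g x‖ₑ ^ (p-1) := by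
          rw [Real.enorm_eq_ofReal_abs, hgp, Real.enorm_eq_ofReal_abs, ENNReal.ofReal_rpow_of_nonneg (abs_nonneg _) (by linarith)]
        have e2 : g x * |g x| ^ (p-2) * g x = |g x| ^ p := by
          rw [mul_right_comm, ← abs_mul_abs_self, mul_assoc]
          rw [← Real.rpow_one_add' (abs_nonneg _) (by linarith), ← Real.rpow_one_add' (abs_nonneg _) (by linarith)]
          congr 1; ring
        rw [e, e2, ← ENNReal.rpow_mul, Real.enorm_eq_ofReal_abs, ← ENNReal.ofReal_rpow_of_nonneg (abs_nonneg _) hp0.le]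
        congr 1
        rw [hq]; field_simp [show p - 1 ≠ 0 by linarith]
      · simp [hq0]
    have hhgi : Integrable (fun x => h x * g x) := by
      have := (hhBC.bdd_mul hgc.measurable hB).integrable volume
      simpa only [mul_comm] using this
    have hnn : ∀ x, 0 ≤ h x * g x := by
      intro x
      rw [hh, Set.indicator]
      split_ifs
      · rw [mul_right_comm]
        exact mul_nonneg (mul_self_nonneg _) (Real.rpow_nonneg (abs_nonneg _) _)
      · simp
    have hX2 : X = ENNReal.ofReal (∫ x, h x * g x) := by
      rw [hXh, ofReal_integral_eq_lintegral_ofReal hhgi (Eventually.of_forall hnn)]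
      congr 1; funext x; exact hhg x
    have hXfin : X ≠ ∞ := by rw [hX2]; exact ENNReal.ofReal_ne_top
    set F := ∫⁻ x, ‖f x‖ₑ ^ p with hF
    have h1 : X ≤ F ^ (1/p) * (C * X) ^ (1/q) := by
      calc X ≤ ‖∫ x, h x * g x‖ₑ := by rw [hX2]; exact Real.ofReal_le_enorm _
        _ = ‖∫ y, f y * ∫ x, qk s (y - x) * h x‖ₑ := by
            rw [hg, Q_swap hf hhBC hs, enorm_neg]
        _ ≤ ∫⁻ y, ‖f y * ∫ x, qk s (y - x) * h x‖ₑ := enorm_integral_le_lintegral_enorm _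
        _ = ∫⁻ y, ((fun y => ‖f y‖ₑ) * (fun y => ‖∫ x, qk s (y - x) * h x‖ₑ)) y := by
            simp only [enorm_mul, Pi.mul_apply]
        _ ≤ F ^ (1/p) * (∫⁻ y, ‖∫ x, qk s (y - x) * h x‖ₑ ^ q) ^ (1/q) :=
            ENNReal.lintegral_mul_le_Lp_mul_Lq _ hpq hf.1.enorm.aemeasurable (continuous_Q hhBC hs).measurable.enorm.aemeasurable
        _ ≤ F ^ (1/p) * (C * X) ^ (1/q) := by
            gcongr
            rw [hXh]
            refine le_trans ?_ (hC h hhBC s hs)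
            apply lintegral_mono; intro x
            exact ENNReal.rpow_le_rpow (Q_le_CT hhBC hs x) hq0.le
    by_cases hX0 : X = 0
    · rw [hX0]; exact zero_le
    have hXp : X = X ^ (1/p) * X ^ (1/q) := by
      rw [← ENNReal.rpow_add _ _ hX0 hXfin]
      have := hpq.inv_add_inv_eq_one
      rw [one_div, one_div, this, ENNReal.rpow_one]
    rw [ENNReal.mul_rpow_of_nonneg _ _ (by positivity), ← mul_assoc] at h1
    nth_rw 1 [hXp] at h1
    have hXq0 : X ^ (1/q) ≠ 0 := by
      rw [Ne, ENNReal.rpow_eq_zero_iff]; push Not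
      exact ⟨fun h => absurd h hX0, fun h => absurd h hXfin⟩
    have hXqt : X ^ (1/q) ≠ ∞ := by finiteness
    have h2 := (ENNReal.mul_le_mul_iff_left hXq0 hXqt).1 h1
    have h3 := ENNReal.rpow_le_rpow h2 hp0.le
    rw [← ENNReal.rpow_mul, one_div_mul_cancel hp0.ne', ENNReal.rpow_one,
      ENNReal.mul_rpow_of_nonneg _ _ hp0.le, ← ENNReal.rpow_mul, ← ENNReal.rpow_mul, one_div_mul_cancel hp0.ne', ENNReal.rpow_one] at h3
    rw [ENNReal.coe_rpow_of_nonneg _ (by positivity), mul_comm]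
    convert h3 using 3
    ring
  have ht := (aecover_closedBall (μ := volume) (x := (0:ℝ)) tendsto_natCast_atTop_atTop).lintegral_tendsto_of_countably_generated
    (f := fun x => ‖g x‖ₑ ^ p) (hgc.measurable.enorm.pow_const p).aemeasurable
  exact le_of_tendsto' ht key

lemma CT_Lp (p : ℝ) (hp : 1 < p) : ∃ C : ℝ≥0, ∀ f : ℝ → ℝ, BC f → ∀ s : ℝ, 0 < s →
    ∫⁻ x : ℝ, ‖CT (fun y => (f y : ℂ)) (x + s * Complex.I)‖ₑ ^ p ≤ C * ∫⁻ x, ‖f x‖ₑ ^ p := by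
  rcases le_or_gt p 2 with h | h
  · exact CT_Lp_low p hp h
  obtain ⟨C1, h1⟩ := Q_Lp_high p h
  obtain ⟨C2, h2⟩ := pois_Lp p hp
  refine ⟨2 ^ (p-1) * (C1 + C2), fun f hf s hs => ?_⟩
  calc ∫⁻ x : ℝ, ‖CT (fun y => (f y : ℂ)) (x + s * Complex.I)‖ₑ ^ p
      ≤ ∫⁻ x : ℝ, (2:ℝ≥0∞) ^ (p - 1) * (‖∫ y, qk s (x - y) * f y‖ₑ ^ p + ‖∫ y, pk s (x - y) * f y‖ₑ ^ p) := by
        apply lintegral_mono; intro x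
        simp only
        rw [CT_eq hf hs]
        refine (enorm_sub_rpow_le _ _ hp.le).trans_eq ?_
        have e : ∀ a : ℝ, ‖(a:ℂ)‖ₑ = ‖a‖ₑ := fun a => by
          rw [← ofReal_norm, ← ofReal_norm, Complex.norm_real]
        rw [enorm_mul, e, e, show ‖Complex.I‖ₑ = 1 by rw [← ofReal_norm]; simp, mul_one]
    _ = (2:ℝ≥0∞) ^ (p - 1) * ((∫⁻ x : ℝ, ‖∫ y, qk s (x - y) * f y‖ₑ ^ p) + ∫⁻ x : ℝ, ‖∫ y, pk s (x - y) * f y‖ₑ ^ p) := by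
        rw [lintegral_const_mul' _ _ (by finiteness), lintegral_add_left]
        exact (continuous_Q hf hs).measurable.enorm.pow_const p
    _ ≤ (2:ℝ≥0∞) ^ (p - 1) * (C1 * (∫⁻ x, ‖f x‖ₑ ^ p) + C2 * ∫⁻ x, ‖f x‖ₑ ^ p) := by
        gcongr
        · exact h1 f hf s hs
        · exact h2 f hf s hs
    _ = _ := by
        rw [ENNReal.coe_mul, ENNReal.coe_rpow_of_nonneg _ (by linarith)]
        push_cast; ring

end P5
end NT

namespace NT
section P6


lemma integral_pk {t : ℝ} (ht : 0 < t) (x : ℝ) :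
    Integrable (fun y => pk t (x - y)) ∧ ∫ y, pk t (x - y) = π := by
  have e : ∀ y, pk t y = t⁻¹ * (1 + (t⁻¹ * y)^2)⁻¹ := by
    intro y; unfold pk; field_simp
  have h0 : Integrable (fun y => pk t y) := by
    simp only [e]
    exact (integrable_inv_one_add_sq.comp_mul_left' (inv_pos.2 ht).ne').const_mul _
  refine ⟨h0.comp_sub_left x, ?_⟩
  rw [integral_sub_left_eq_self (fun y => pk t y) volume x]
  simp only [e]
  rw [integral_const_mul, Measure.integral_comp_mul_left (fun y => (1 + y^2)⁻¹) t⁻¹, integral_univ_inv_one_add_sq]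
  rw [inv_inv, abs_of_pos ht, smul_eq_mul]
  field_simp

lemma cotlar {f : ℝ → ℂ} (hf : BC f) {s t : ℝ} (hs : 0 < s) (ht : 0 < t) (x : ℝ) :
    (π : ℂ) * CT f (x + (s + t : ℝ) * Complex.I) = ∫ y : ℝ, (pk t (x - y) : ℂ) * CT f (y + s * Complex.I) := by
  set α : ℂ := x + (s + t : ℝ) * Complex.I with hα
  set β : ℂ := x + (s - t : ℝ) * Complex.I with hβ
  have hαim : α.im = s + t := by simp [hα]
  have hβim : β.im = s - t := by simp [hβ]
  set g : ℝ → ℂ := fun y => f y / (α - y) with hg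
  have hgBC : BC g := by
    obtain ⟨hm, ⟨B, hB⟩, R, hR⟩ := hf
    refine ⟨?_, ⟨B * (s+t)⁻¹, fun y => ?_⟩, R, fun y hy => by simp [hg, hR y hy]⟩
    · exact hm.div (by fun_prop)
    · rw [hg, norm_div, div_eq_mul_inv]
      have hB0 : 0 ≤ B := (norm_nonneg _).trans (hB 0)
      have := im_le_norm_sub α y
      rw [hαim] at this
      gcongr
      exact hB y
  obtain ⟨D, hD, hDb⟩ := CT_bound hgBC hs
  have hsub : ∀ z : ℂ, s ≤ z.im → t ≤ ‖z - β‖ := by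
    intro z hz
    have := (le_abs_self _).trans (Complex.abs_im_le_norm (z - β))
    rw [Complex.sub_im, hβim] at this
    linarith
  have hcl := cauchy_line (fun z => CT g z / (z - β)) s (D * (1 + (1 + ‖β‖)/t)) 2 (by norm_num)
    (by
      refine DifferentiableOn.div ((CT_differentiableOn (hgBC.integrable volume)).mono fun z hz => lt_of_lt_of_le hs hz) (by fun_prop) ?_
      intro z hz h
      have := hsub z hz
      rw [h, norm_zero] at this; linarith)
    (by
      intro z hz
      have h1 := hsub z hz
      have h0 : 0 < ‖z - β‖ := by linarith
      have h2 : 1 + ‖z‖ ≤ (1 + (1 + ‖β‖)/t) * ‖z - β‖ := by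
        have : ‖z‖ ≤ ‖z - β‖ + ‖β‖ := by simpa using norm_add_le (z - β) β
        have h3 : 1 + ‖β‖ ≤ (1 + ‖β‖)/t * ‖z - β‖ := by
          rw [div_mul_eq_mul_div, le_div_iff₀ ht]
          gcongr
        linarith
      have hz1 : 0 < 1 + ‖z‖ := by positivity
      rw [norm_div, Real.rpow_neg hz1.le, div_le_iff₀ h0]
      have h4 := hDb z hz
      refine h4.trans ?_
      have : D * (1 + (1 + ‖β‖) / t) * ((1 + ‖z‖) ^ (2:ℝ))⁻¹ * ‖z - β‖ = D * (((1 + ‖z‖)^2)⁻¹ * ((1 + (1 + ‖β‖)/t) * ‖z - β‖)) := by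
        rw [Real.rpow_two]; ring
      rw [this]
      gcongr
      calc (1 + ‖z‖)⁻¹ = ((1 + ‖z‖)^2)⁻¹ * (1 + ‖z‖) := by field_simp
        _ ≤ _ := by gcongr)
  obtain ⟨hGi, hG0⟩ := hcl
  obtain ⟨hpi, hp⟩ := integral_pk ht x
  have key : ∀ y : ℝ, (pk t (x - y) : ℂ) * CT f (y + s * Complex.I) =
      (pk t (x - y) : ℂ) * CT f α - t * (CT g (y + s * Complex.I) / ((y + s * Complex.I) - β)) := by
    intro y
    set z : ℂ := y + s * Complex.I with hz
    have hzim : z.im = s := by simp [hz]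
    have hza : z - α ≠ 0 := by
      intro h
      have := congrArg Complex.im h
      rw [Complex.sub_im, hzim, hαim] at this
      simp at this; linarith
    have hzb : z - β ≠ 0 := by
      intro h
      have := hsub z hzim.ge
      rw [h, norm_zero] at this; linarith
    have h1 : CT f z - CT f α = (α - z) * CT g z := by
      unfold CT
      rw [← integral_sub (CT_integrable (hf.integrable volume) (by linarith)) (CT_integrable (hf.integrable volume) (by linarith)),
        ← integral_const_mul]
      congr 1; funext w
      have hzw : z - w ≠ 0 := by
        intro h
        have := congrArg Complex.im h
        simp [hzim] at this; linarith
      have haw : α - w ≠ 0 := by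
        intro h
        have := congrArg Complex.im h
        simp [hαim] at this; linarith
      rw [hg]
      field_simp
      ring
    have h2 : (pk t (x - y) : ℂ) = t / ((z - α) * (z - β)) := by
      unfold pk
      push_cast
      congr 1
      rw [hz, hα, hβ]; push_cast
      ring_nf
      rw [Complex.I_sq]; ring
    have h3 : CT f z = CT f α + (α - z) * CT g z := by rw [← h1]; ring
    rw [h3, h2, show α - z = -(z - α) by ring]
    generalize z - α = a at hza ⊢
    generalize z - β = b at hzb ⊢
    field_simp
    ring
  have hpi' : Integrable (fun y => ((pk t (x - y) : ℝ) : ℂ)) := hpi.ofReal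
  simp only [key]
  rw [integral_sub (hpi'.mul_const _) (hGi.const_mul _), integral_const_mul, hG0, integral_mul_const]
  rw [integral_complex_ofReal, hp]; simp

lemma CT_le_HLM {f : ℝ → ℂ} (hf : BC f) {s t : ℝ} (hs : 0 < s) (ht : 0 < t) (x : ℝ) :
    ‖CT f (x + (s + t : ℝ) * Complex.I)‖ₑ ≤ 32 * HLM (fun y : ℝ => ‖CT f (y + s * Complex.I)‖ₑ) x := by
  have h1 : ‖CT f (x + (s + t : ℝ) * Complex.I)‖ₑ ≤ ‖(π : ℂ) * CT f (x + (s + t : ℝ) * Complex.I)‖ₑ := by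
    rw [enorm_le_iff_norm_le, norm_mul]
    have : 1 ≤ ‖(π:ℂ)‖ := by
      rw [Complex.norm_real, Real.norm_of_nonneg Real.pi_pos.le]; linarith [Real.pi_gt_three]
    nlinarith [norm_nonneg (CT f (x + (s + t : ℝ) * Complex.I))]
  refine h1.trans ?_
  rw [cotlar hf hs ht]
  refine (enorm_integral_le_lintegral_enorm _).trans ?_
  refine le_trans (le_of_eq ?_) (pois_le (continuous_CT (hf.integrable volume) hs).measurable.enorm ht x)
  congr 1; funext y
  rw [enorm_mul]
  congr 1
  rw [← ofReal_norm, Complex.norm_real, Real.norm_of_nonneg (pk_nonneg ht _)]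

end P6
end NT

namespace NT
section P7


lemma iSup_rpow {ι : Sort*} (a : ι → ℝ≥0∞) {p : ℝ} (hp : 0 < p) : (⨆ i, a i) ^ p = ⨆ i, a i ^ p := by
  exact (ENNReal.orderIsoRpow p hp).map_iSup a

lemma CT_max (p : ℝ) (hp : 1 < p) : ∃ C : ℝ≥0, ∀ f : ℝ → ℝ, BC f →
    ∫⁻ x : ℝ, (⨆ j : ℤ, ‖CT (fun y => (f y : ℂ)) (x + ((2:ℝ)^j : ℝ) * Complex.I)‖ₑ) ^ p ≤ C * ∫⁻ x, ‖f x‖ₑ ^ p := by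
  obtain ⟨C1, h1⟩ := HLM_strong p hp
  obtain ⟨C2, h2⟩ := CT_Lp p hp
  refine ⟨32 ^ p * (C1 * C2), fun f hf => ?_⟩
  have hfi := hf.ofReal.integrable volume
  have hp0 : 0 < p := by linarith
  set a : ℤ → ℝ → ℝ≥0∞ := fun j x => ‖CT (fun y => (f y : ℂ)) (x + ((2:ℝ)^j : ℝ) * Complex.I)‖ₑ with ha
  have ham : ∀ j, Measurable (a j) := fun j => (continuous_CT hfi (by positivity)).measurable.enorm
  have key : ∀ i : ℤ, ∫⁻ x, (⨆ (j : ℤ) (_ : i < j), a j x) ^ p ≤ (32 ^ p * (C1 * C2) : ℝ≥0) * ∫⁻ x, ‖f x‖ₑ ^ p := by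
    intro i
    have hle : ∀ x, (⨆ (j : ℤ) (_ : i < j), a j x) ≤ 32 * HLM (a i) x := by
      intro x
      refine iSup₂_le fun j hj => ?_
      have hlt : (2:ℝ)^i < (2:ℝ)^j := zpow_lt_zpow_right₀ (by norm_num) hj
      have := CT_le_HLM hf.ofReal (s := (2:ℝ)^i) (t := (2:ℝ)^j - (2:ℝ)^i) (by positivity) (by linarith) x
      rw [add_sub_cancel] at this
      exact this
    obtain ⟨D, hD, hDb⟩ := CT_bound hf.ofReal (s := (2:ℝ)^i) (by positivity)
    have h3 := h1 (fun x => ‖CT (fun y => (f y : ℂ)) (x + ((2:ℝ)^i : ℝ) * Complex.I)‖)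
      (continuous_CT hfi (by positivity)).measurable.norm (fun x => norm_nonneg _) ⟨D, fun x => by
        refine (hDb _ (by rw [Complex.add_im, Complex.im_ofReal_mul]; simp)).trans ?_
        apply mul_le_of_le_one_right hD
        apply inv_le_one_of_one_le₀
        linarith [norm_nonneg ((x:ℂ) + (((2:ℝ)^i : ℝ) : ℂ) * Complex.I)]⟩
    simp only [ofReal_norm] at h3
    calc ∫⁻ x, (⨆ (j : ℤ) (_ : i < j), a j x) ^ p ≤ ∫⁻ x, 32 ^ p * HLM (a i) x ^ p := by
          apply lintegral_mono; intro x
          simp only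
          rw [← ENNReal.mul_rpow_of_nonneg _ _ hp0.le]
          exact ENNReal.rpow_le_rpow (hle x) hp0.le
      _ = 32 ^ p * ∫⁻ x, HLM (a i) x ^ p := lintegral_const_mul' _ _ (by finiteness)
      _ ≤ 32 ^ p * (C1 * (C2 * ∫⁻ x, ‖f x‖ₑ ^ p)) := by
          gcongr
          refine h3.trans ?_
          gcongr
          exact h2 f hf _ (by positivity)
      _ = _ := by
          push_cast
          rw [ENNReal.coe_rpow_of_nonneg _ hp0.le]
          push_cast; ring
  have e : ∀ x, (⨆ j : ℤ, a j x) ^ p = ⨆ k : ℕ, (⨆ (j : ℤ) (_ : -(k:ℤ) < j), a j x) ^ p := by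
    intro x
    rw [← iSup_rpow _ hp0]
    congr 1
    apply le_antisymm
    · refine iSup_le fun j => ?_
      refine le_iSup_of_le (j.natAbs + 1) ?_
      exact le_iSup₂_of_le j (by omega) le_rfl
    · exact iSup_le fun k => iSup₂_le fun j _ => le_iSup (fun j => a j x) j
  have e' : ∫⁻ x, (⨆ j : ℤ, a j x) ^ p = ⨆ k : ℕ, ∫⁻ x, (⨆ (j : ℤ) (_ : -(k:ℤ) < j), a j x) ^ p := by
    simp only [e]
    rw [lintegral_iSup]
    · intro k
      exact (Measurable.iSup fun j => Measurable.iSup fun _ => ham j).pow_const p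
    · intro k l hkl x
      simp only
      apply ENNReal.rpow_le_rpow _ hp0.le
      refine iSup₂_le fun j hj => le_iSup₂_of_le j (by omega) le_rfl
  rw [e']
  exact iSup_le fun k => key _

/-- directional maximal function -/
def MX {E : Type*} [NormedAddCommGroup E] [NormedSpace ℝ E] (f : E → ℝ) (v x : E) : ℝ≥0∞ :=
  ⨆ j : ℤ, (‖∫ r : ℝ, qk ((2:ℝ)^j) r * f (x - r • v)‖ₑ + ∫⁻ r : ℝ, ENNReal.ofReal (pk ((2:ℝ)^j) r) * ‖f (x - r • v)‖ₑ)

lemma MX_one (p : ℝ) (hp : 1 < p) : ∃ C : ℝ≥0, ∀ f : ℝ → ℝ, BC f →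
    ∫⁻ x : ℝ, MX f 1 x ^ p ≤ C * ∫⁻ x, ‖f x‖ₑ ^ p := by
  obtain ⟨C1, h1⟩ := HLM_strong p hp
  obtain ⟨C2, h2⟩ := CT_max p hp
  refine ⟨2 ^ (p-1) * (C2 + 32 ^ p * C1), fun f hf => ?_⟩
  have hfi := hf.ofReal.integrable volume
  have hp0 : 0 < p := by linarith
  set a : ℝ → ℝ≥0∞ := fun x => ⨆ j : ℤ, ‖CT (fun y => (f y : ℂ)) (x + ((2:ℝ)^j : ℝ) * Complex.I)‖ₑ with ha
  have ham : Measurable a := Measurable.iSup fun j => (continuous_CT hfi (by positivity)).measurable.enorm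
  have hle : ∀ x, MX f 1 x ≤ a x + 32 * HLM (fun y => ‖f y‖ₑ) x := by
    intro x
    refine iSup_le fun j => ?_
    have hs : (0:ℝ) < 2 ^ j := by positivity
    gcongr
    · refine le_iSup_of_le j ?_
      refine le_trans (le_of_eq ?_) (Q_le_CT hf hs x)
      congr 1
      rw [← integral_sub_left_eq_self (fun y => qk (2^j) (x - y) * f y) volume x]
      simp
    · refine le_trans (le_of_eq ?_) (pois_le hf.1.enorm hs x)
      rw [← lintegral_sub_left_eq_self (fun y => ENNReal.ofReal (pk (2^j) (x - y)) * ‖f y‖ₑ) x]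
      simp
  have hf' := hf
  obtain ⟨hm, ⟨B, hB⟩, R, hR⟩ := hf'
  have h3 := h1 (fun x => |f x|) (by fun_prop) (fun x => abs_nonneg _) ⟨B, hB⟩
  have e : ∀ x, ENNReal.ofReal |f x| = ‖f x‖ₑ := fun x => (Real.enorm_eq_ofReal_abs _).symm
  simp only [e] at h3
  calc ∫⁻ x : ℝ, MX f 1 x ^ p ≤ ∫⁻ x, 2 ^ (p-1) * (a x ^ p + 32 ^ p * HLM (fun y => ‖f y‖ₑ) x ^ p) := by
        apply lintegral_mono; intro x
        simp only
        rw [← ENNReal.mul_rpow_of_nonneg _ _ hp0.le]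
        exact (ENNReal.rpow_le_rpow (hle x) hp0.le).trans (ENNReal.rpow_add_le_mul_rpow_add_rpow _ _ hp.le)
    _ = 2 ^ (p-1) * ((∫⁻ x, a x ^ p) + 32 ^ p * ∫⁻ x, HLM (fun y => ‖f y‖ₑ) x ^ p) := by
        rw [lintegral_const_mul' _ _ (by finiteness), lintegral_add_left (ham.pow_const p), lintegral_const_mul' _ _ (by finiteness)]
    _ ≤ 2 ^ (p-1) * (C2 * (∫⁻ x, ‖f x‖ₑ ^ p) + 32 ^ p * (C1 * ∫⁻ x, ‖f x‖ₑ ^ p)) := by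
        gcongr
        exact h2 f hf
    _ = _ := by
        push_cast
        rw [ENNReal.coe_rpow_of_nonneg _ hp0.le, ENNReal.coe_rpow_of_nonneg _ (by linarith)]
        push_cast; ring

end P7
end NT

namespace NT
section P8


variable {E : Type*} [NormedAddCommGroup E] [NormedSpace ℝ E] [FiniteDimensional ℝ E]
  [MeasurableSpace E] [BorelSpace E]

lemma measurable_MX {f : E → ℝ} (hf : Measurable f) : Measurable (fun z : E × E => MX f z.1 z.2) := by
  unfold MX
  refine Measurable.iSup fun j => ?_
  have hs : (0:ℝ) < 2 ^ j := by positivity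
  have h1 : Measurable (fun z : (E × E) × ℝ => f (z.1.2 - z.2 • z.1.1)) := hf.comp (by fun_prop)
  have h2 := (continuous_qk hs).measurable
  have h3 := (continuous_pk hs).measurable
  have h4 : StronglyMeasurable (fun z : (E × E) × ℝ => qk (2^j) z.2 * f (z.1.2 - z.2 • z.1.1)) :=
    ((h2.comp measurable_snd).mul h1).stronglyMeasurable
  have h5 : Measurable (fun z : (E × E) × ℝ => ENNReal.ofReal (pk (2^j) z.2) * ‖f (z.1.2 - z.2 • z.1.1)‖ₑ) :=
    ((h3.comp measurable_snd).ennreal_ofReal).mul h1.enorm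
  exact (h4.integral_prod_right'.measurable.enorm).add h5.lintegral_prod_right'

lemma MX_dir (μ : Measure E) [μ.IsAddHaarMeasure] {p : ℝ} {C : ℝ≥0}
    (hC : ∀ f : ℝ → ℝ, BC f → ∫⁻ x : ℝ, MX f 1 x ^ p ≤ C * ∫⁻ x, ‖f x‖ₑ ^ p)
    {f : E → ℝ} (hf : BC f) {v : E} (hv : v ≠ 0) :
    ∫⁻ x, MX f v x ^ p ∂μ ≤ C * ∫⁻ x, ‖f x‖ₑ ^ p ∂μ := by
  obtain ⟨φ, hφ⟩ := SeparatingDual.exists_eq_one (R := ℝ) hv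
  set L := ContinuousLinearEquiv.equivOfRightInverse φ (ContinuousLinearMap.toSpanSingleton ℝ v)
    (fun r => by simp [hφ]) with hL
  have hLs : ∀ z, L.symm z = z.1 • v + z.2 := by
    intro z; rw [hL, ContinuousLinearEquiv.equivOfRightInverse_symm_apply]; simp
  set η : Measure φ.ker := Measure.addHaar with hη
  set ν : Measure E := ((volume : Measure ℝ).prod η).map L.symm with hν
  have : ν.IsAddHaarMeasure := L.symm.isAddHaarMeasure_map _
  have hc := Measure.isAddLeftInvariant_eq_smul μ ν
  set c := Measure.addHaarScalarFactor μ ν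
  have tonelli : ∀ F : E → ℝ≥0∞, Measurable F → ∫⁻ x, F x ∂μ = c * ∫⁻ w : φ.ker, (∫⁻ r : ℝ, F (r • v + w)) ∂η := by
    intro F hF
    rw [hc, lintegral_smul_measure, hν, lintegral_map hF L.symm.continuous.measurable, lintegral_prod_symm]
    · simp only [hLs]; rfl
    · exact (hF.comp L.symm.continuous.measurable).aemeasurable
  have hm1 : Measurable (fun x => MX f v x ^ p) :=
    ((measurable_MX hf.1).comp (measurable_const.prodMk measurable_id)).pow_const p
  rw [tonelli _ hm1, tonelli _ (hf.1.enorm.pow_const p), mul_left_comm]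
  gcongr
  rw [← lintegral_const_mul' _ _ (by finiteness)]
  apply lintegral_mono
  intro w
  simp only
  have hBC : BC (fun r : ℝ => f (r • v + w)) := by
    obtain ⟨hm, ⟨B, hB⟩, R, hR⟩ := hf
    refine ⟨hm.comp (by fun_prop), ⟨B, fun r => hB _⟩, (R + ‖(w:E)‖)/‖v‖, fun r hr => hR _ ?_⟩
    rw [div_lt_iff₀ (norm_pos_iff.2 hv)] at hr
    have : ‖r • v‖ ≤ ‖r • v + w‖ + ‖(w:E)‖ := by simpa using norm_sub_le (r • v + w) (w:E)
    rw [norm_smul] at this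
    linarith
  refine le_trans (le_of_eq ?_) (hC _ hBC)
  congr 1; funext r
  congr 1
  unfold MX
  have e : ∀ r' : ℝ, r • v + (w:E) - r' • v = (r - r' • 1) • v + w := by
    intro r'; rw [smul_eq_mul, mul_one, sub_smul]; abel
  simp only [e]

end P8
end NT

namespace NT
section P9


variable {E : Type*} [NormedAddCommGroup E] [NormedSpace ℝ E] [FiniteDimensional ℝ E]
  [MeasurableSpace E] [BorelSpace E] [Nontrivial E]

lemma measurable_MX' {α : Type*} [MeasurableSpace α] {f : E → ℝ} (hf : Measurable f) {g h : α → E} (hg : Measurable g)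
    (hh : Measurable h) : Measurable (fun a => MX f (g a) (h a)) := by
  have := (measurable_MX hf).comp (hg.prodMk hh)
  simp only [Function.comp_def] at this
  exact this

lemma polar_back (x : ({0}ᶜ : Set E)) :
    ((homeomorphUnitSphereProd E x).2 : ℝ) • ((homeomorphUnitSphereProd E x).1 : E) = x := by
  have := congrArg Subtype.val ((homeomorphUnitSphereProd E).symm_apply_apply x)
  rwa [homeomorphUnitSphereProd_symm_apply_coe] at this

lemma polar_l (μ : Measure E) [μ.IsAddHaarMeasure] {F : E → ℝ≥0∞} (hF : Measurable F) :
    ∫⁻ w, F w ∂μ = ∫⁻ θ : sphere (0:E) 1, (∫⁻ r in Set.Ioi (0:ℝ),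
      ENNReal.ofReal (r ^ (Module.finrank ℝ E - 1)) * F (r • (θ:E))) ∂μ.toSphere := by
  have hm : Measurable (fun z : sphere (0:E) 1 × Set.Ioi (0:ℝ) => F ((z.2:ℝ) • (z.1:E))) := hF.comp (by fun_prop)
  calc ∫⁻ w, F w ∂μ = ∫⁻ x : ({(0)}ᶜ : Set E), F x.1 ∂(μ.comap (↑)) := by
        rw [lintegral_subtype_comap (measurableSet_singleton _).compl, restrict_compl_singleton]
    _ = ∫⁻ x : ({(0)}ᶜ : Set E), (fun z : sphere (0:E) 1 × Set.Ioi (0:ℝ) => F ((z.2:ℝ) • (z.1:E))) (homeomorphUnitSphereProd E x) ∂(μ.comap (↑)) := by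
        simp only [polar_back]
    _ = ∫⁻ z, F ((z.2:ℝ) • (z.1:E)) ∂(μ.toSphere.prod (.volumeIoiPow (Module.finrank ℝ E - 1))) :=
        μ.measurePreserving_homeomorphUnitSphereProd.lintegral_comp hm
    _ = ∫⁻ θ : sphere (0:E) 1, (∫⁻ r : Set.Ioi (0:ℝ), F ((r:ℝ) • (θ:E)) ∂(.volumeIoiPow (Module.finrank ℝ E - 1))) ∂μ.toSphere :=
        lintegral_prod _ hm.aemeasurable
    _ = _ := by
        congr 1; funext θ
        rw [Measure.volumeIoiPow, lintegral_withDensity_eq_lintegral_mul _ (by fun_prop) (show Measurable (fun r : Set.Ioi (0:ℝ) => F ((r:ℝ) • (θ:E))) from hF.comp (by fun_prop))]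
        simp only [Pi.mul_apply]
        rw [lintegral_subtype_comap measurableSet_Ioi (fun r : ℝ => ENNReal.ofReal (r ^ (Module.finrank ℝ E - 1)) * F (r • (θ:E)))]

lemma polar_i {V : Type*} [NormedAddCommGroup V] [NormedSpace ℝ V] (μ : Measure E) [μ.IsAddHaarMeasure] {F : E → V} (hF : Integrable F μ) :
    ∫ w, F w ∂μ = ∫ θ : sphere (0:E) 1, (∫ r in Set.Ioi (0:ℝ),
      (r ^ (Module.finrank ℝ E - 1)) • F (r • (θ:E))) ∂μ.toSphere := by
  have hemb : MeasurableEmbedding (homeomorphUnitSphereProd E) := Homeomorph.measurableEmbedding _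
  have hi : Integrable (fun z : sphere (0:E) 1 × Set.Ioi (0:ℝ) => F ((z.2:ℝ) • (z.1:E)))
      (μ.toSphere.prod (.volumeIoiPow (Module.finrank ℝ E - 1))) := by
    rw [← μ.measurePreserving_homeomorphUnitSphereProd.integrable_comp_emb hemb]
    simp only [Function.comp_def, polar_back]
    have := integrableOn_iff_comap_subtypeVal (μ := μ) (f := F) (measurableSet_singleton (0:E)).compl
    exact this.1 hF.integrableOn
  calc ∫ w, F w ∂μ = ∫ x : ({(0)}ᶜ : Set E), F x.1 ∂(μ.comap (↑)) := by
        rw [integral_subtype_comap (measurableSet_singleton _).compl, restrict_compl_singleton]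
    _ = ∫ x : ({(0)}ᶜ : Set E), (fun z : sphere (0:E) 1 × Set.Ioi (0:ℝ) => F ((z.2:ℝ) • (z.1:E))) (homeomorphUnitSphereProd E x) ∂(μ.comap (↑)) := by
        simp only [polar_back]
    _ = ∫ z, F ((z.2:ℝ) • (z.1:E)) ∂(μ.toSphere.prod (.volumeIoiPow (Module.finrank ℝ E - 1))) :=
        μ.measurePreserving_homeomorphUnitSphereProd.integral_comp hemb (fun z : sphere (0:E) 1 × Set.Ioi (0:ℝ) => F ((z.2:ℝ) • (z.1:E)))
    _ = ∫ θ : sphere (0:E) 1, (∫ r : Set.Ioi (0:ℝ), F ((r:ℝ) • (θ:E)) ∂(.volumeIoiPow (Module.finrank ℝ E - 1))) ∂μ.toSphere :=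
        integral_prod _ hi
    _ = _ := by
        congr 1; funext θ
        simp only [Measure.volumeIoiPow, ENNReal.ofReal]
        rw [integral_withDensity_eq_integral_smul (measurable_subtype_coe.pow_const _).real_toNNReal,
          integral_subtype_comap measurableSet_Ioi fun r : ℝ ↦ Real.toNNReal (r ^ (Module.finrank ℝ E - 1)) • F (r • (θ:E)),
          setIntegral_congr_fun measurableSet_Ioi fun x hx ↦ ?_]
        rw [NNReal.smul_def, Real.coe_toNNReal _ (pow_nonneg (Set.mem_Ioi.1 hx).le _)]

/-- averaged directional maximal function -/
def GX (μ : Measure E) (f : E → ℝ) (x : E) : ℝ≥0∞ := ∫⁻ θ : sphere (0:E) 1, MX f (θ:E) x ∂μ.toSphere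

lemma measurable_GX (μ : Measure E) [μ.IsAddHaarMeasure] {f : E → ℝ} (hf : Measurable f) : Measurable (GX μ f) := by
  unfold GX
  apply Measurable.lintegral_prod_right'
    (f := fun z : E × sphere (0:E) 1 => MX f (z.2 : E) z.1)
  exact measurable_MX' hf (by fun_prop) (by fun_prop)

lemma GX_Lp (μ : Measure E) [μ.IsAddHaarMeasure] (p : ℝ) (hp : 1 < p) : ∃ C : ℝ≥0, ∀ f : E → ℝ, BC f →
    ∫⁻ x, GX μ f x ^ p ∂μ ≤ C * ∫⁻ x, ‖f x‖ₑ ^ p ∂μ := by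
  obtain ⟨C, hC⟩ := MX_one p hp
  set q : ℝ := p / (p - 1) with hq
  have hpq : p.HolderConjugate q := Real.HolderConjugate.conjExponent (by linarith)
  have hp0 : 0 < p := hpq.pos
  have hq0 : 0 < q := hpq.symm.pos
  set S := μ.toSphere Set.univ with hS
  have hSt : S ≠ ∞ := measure_ne_top _ _
  refine ⟨(S ^ (p/q) * C * S).toNNReal, fun f hf => ?_⟩
  rw [ENNReal.coe_toNNReal (by finiteness)]
  have hholder : ∀ x, GX μ f x ^ p ≤ S ^ (p/q) * ∫⁻ θ : sphere (0:E) 1, MX f (θ:E) x ^ p ∂μ.toSphere := by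
    intro x
    have hmx : Measurable (fun θ : sphere (0:E) 1 => MX f (θ:E) x) :=
      measurable_MX' hf.1 (by fun_prop) (by fun_prop)
    have := ENNReal.lintegral_mul_le_Lp_mul_Lq μ.toSphere hpq hmx.aemeasurable (g := fun _ => 1) aemeasurable_const
    simp only [Pi.mul_apply, mul_one, ENNReal.one_rpow, lintegral_one] at this
    have h2 := ENNReal.rpow_le_rpow this hp0.le
    rw [ENNReal.mul_rpow_of_nonneg _ _ hp0.le, ← ENNReal.rpow_mul, ← ENNReal.rpow_mul, one_div_mul_cancel hp0.ne', ENNReal.rpow_one, mul_comm] at h2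
    unfold GX
    convert h2 using 3
    ring
  calc ∫⁻ x, GX μ f x ^ p ∂μ ≤ ∫⁻ x, S ^ (p/q) * ∫⁻ θ : sphere (0:E) 1, MX f (θ:E) x ^ p ∂μ.toSphere ∂μ :=
        lintegral_mono hholder
    _ = S ^ (p/q) * ∫⁻ θ : sphere (0:E) 1, ∫⁻ x, MX f (θ:E) x ^ p ∂μ ∂μ.toSphere := by
        rw [lintegral_const_mul' _ _ (by finiteness), lintegral_lintegral_swap]
        exact ((measurable_MX' hf.1 (g := fun z : E × sphere (0:E) 1 => (z.2 : E)) (h := fun z => z.1) (by fun_prop) (by fun_prop)).pow_const p).aemeasurable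
    _ ≤ S ^ (p/q) * ∫⁻ θ : sphere (0:E) 1, C * ∫⁻ x, ‖f x‖ₑ ^ p ∂μ ∂μ.toSphere := by
        gcongr with θ
        exact MX_dir μ hC hf (ne_zero_of_mem_unit_sphere θ)
    _ = _ := by
        rw [lintegral_const]; ring

end P9
end NT

namespace NT
section P10

section A10
variable {E : Type*} [NormedAddCommGroup E] [NormedSpace ℝ E] [FiniteDimensional ℝ E]
  [MeasurableSpace E] [BorelSpace E] [Nontrivial E]

lemma pow_pred_mul_inv {r : ℝ} (hr : 0 < r) : r ^ (Module.finrank ℝ E - 1) * (r ^ (Module.finrank ℝ E))⁻¹ = r⁻¹ := by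
  have hd : 0 < Module.finrank ℝ E := Module.finrank_pos
  obtain ⟨m, hm⟩ : ∃ m, Module.finrank ℝ E = m + 1 := ⟨Module.finrank ℝ E - 1, by omega⟩
  rw [hm, Nat.add_sub_cancel, pow_succ]
  field_simp

lemma GX_pois (μ : Measure E) [μ.IsAddHaarMeasure] {f : E → ℝ} (hf : Measurable f) (j : ℤ) (x : E) :
    ∫⁻ w, ENNReal.ofReal ((‖w‖ ^ (Module.finrank ℝ E - 1))⁻¹ * pk ((2:ℝ)^j) ‖w‖) * ‖f (x - w)‖ₑ ∂μ ≤ GX μ f x := by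
  have hs : (0:ℝ) < (2:ℝ)^j := by positivity
  have hm := (continuous_pk hs).measurable
  rw [polar_l μ (by fun_prop)]
  unfold GX
  apply lintegral_mono; intro θ
  have hθ : ‖(θ:E)‖ = 1 := by simp
  calc _ = ∫⁻ r in Set.Ioi (0:ℝ), ENNReal.ofReal (pk ((2:ℝ)^j) r) * ‖f (x - r • (θ:E))‖ₑ := by
        apply setLIntegral_congr_fun measurableSet_Ioi
        intro r hr
        have hr : 0 < r := hr
        simp only
        rw [← mul_assoc, ← ENNReal.ofReal_mul (by positivity), norm_smul, hθ, mul_one, Real.norm_of_nonneg hr.le,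
          mul_inv_cancel_left₀ (by positivity)]
    _ ≤ ∫⁻ r : ℝ, ENNReal.ofReal (pk ((2:ℝ)^j) r) * ‖f (x - r • (θ:E))‖ₑ := setLIntegral_le_lintegral _ _
    _ ≤ MX f (θ:E) x := by
        unfold MX
        exact le_trans le_add_self (le_iSup (f := fun j : ℤ => ‖∫ r:ℝ, qk ((2:ℝ)^j) r * f (x - r•(θ:E))‖ₑ + ∫⁻ r:ℝ, ENNReal.ofReal (pk ((2:ℝ)^j) r) * ‖f (x - r•(θ:E))‖ₑ) j)

/-- smooth truncation -/
def kt (k : E → ℂ) (s : ℝ) (w : E) : ℂ := (‖w‖ * qk s ‖w‖) • k w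

lemma kt_polar {k : E → ℂ} (hhom : ∀ r : ℝ, 0 < r → ∀ w, w ≠ 0 → k (r • w) = ((r ^ (Module.finrank ℝ E))⁻¹ : ℝ) • k w)
    {s r : ℝ} (hr : 0 < r) (θ : sphere (0:E) 1) :
    (r ^ (Module.finrank ℝ E - 1)) • kt k s (r • (θ:E)) = qk s r • k θ := by
  have hθ : ‖(θ:E)‖ = 1 := by simp
  unfold kt
  rw [hhom r hr _ (ne_zero_of_mem_unit_sphere θ), smul_smul, smul_smul, norm_smul, hθ, mul_one, Real.norm_of_nonneg hr.le]
  congr 1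
  calc _ = (r ^ (Module.finrank ℝ E - 1) * (r ^ (Module.finrank ℝ E))⁻¹) * (r * qk s r) := by ring
    _ = _ := by rw [pow_pred_mul_inv hr]; field_simp

lemma kt_odd {k : E → ℂ} (hodd : ∀ w, w ≠ 0 → k (-w) = - k w) (s : ℝ) (w : E) : kt k s (-w) = - kt k s w := by
  unfold kt
  rcases eq_or_ne w 0 with rfl | hw
  · simp
  · rw [hodd w hw, norm_neg, smul_neg]

lemma measurable_kt {k : E → ℂ} (hk : Measurable k) {s : ℝ} (hs : 0 < s) : Measurable (kt k s) := by
  have := (continuous_qk hs).measurable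
  unfold kt
  fun_prop

lemma kt_integrable (μ : Measure E) [μ.IsAddHaarMeasure] {f : E → ℝ} (hf : BC f) {k : E → ℂ} (hk : Measurable k)
    (hhom : ∀ r : ℝ, 0 < r → ∀ w, w ≠ 0 → k (r • w) = ((r ^ (Module.finrank ℝ E))⁻¹ : ℝ) • k w)
    {B : ℝ} (hB : ∀ θ : sphere (0:E) 1, ‖k θ‖ ≤ B) {s : ℝ} (hs : 0 < s) (x : E) :
    Integrable (fun w => f (x - w) • kt k s w) μ := by
  have hfm := hf.1
  have hkm := measurable_kt hk hs
  have hFm : Measurable (fun w => f (x - w) • kt k s w) := by fun_prop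
  refine ⟨hFm.aestronglyMeasurable, ?_⟩
  obtain ⟨_, ⟨M, hM⟩, R, hR⟩ := hf
  unfold HasFiniteIntegral
  rw [polar_l μ (by fun_prop)]
  have hB0 : 0 ≤ B := by
    obtain ⟨θ⟩ : Nonempty (sphere (0:E) 1) := (NormedSpace.sphere_nonempty.2 zero_le_one).to_subtype
    exact (norm_nonneg _).trans (hB θ)
  have hM0 : 0 ≤ M := (norm_nonneg _).trans (hM 0)
  refine lt_of_le_of_lt (lintegral_mono (g := fun _ => ENNReal.ofReal (M * (s⁻¹ * B)) * volume (Set.Icc (0:ℝ) (R + ‖x‖))) ?_) ?_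
  · intro θ
    have hθ : ‖(θ:E)‖ = 1 := by simp
    calc _ ≤ ∫⁻ r in Set.Ioi (0:ℝ), (Set.Icc (0:ℝ) (R + ‖x‖)).indicator (fun _ => ENNReal.ofReal (M * (s⁻¹ * B))) r := by
          apply setLIntegral_mono' measurableSet_Ioi
          intro r hr
          have hr : 0 < r := hr
          by_cases hm : r ∈ Set.Icc (0:ℝ) (R + ‖x‖)
          · rw [Set.indicator_of_mem hm, ← ofReal_norm, ← ENNReal.ofReal_mul (by positivity)]
            apply ENNReal.ofReal_le_ofReal
            have h1 : r ^ (Module.finrank ℝ E - 1) * ‖kt k s (r • (θ:E))‖ = |qk s r| * ‖k θ‖ := by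
              have := congrArg norm (kt_polar hhom (s := s) hr θ)
              rwa [norm_smul, norm_smul, Real.norm_of_nonneg (by positivity)] at this
            rw [norm_smul, mul_left_comm, h1]
            exact mul_le_mul (hM _) (mul_le_mul (abs_qk_le hs r) (hB θ) (norm_nonneg _) (by positivity)) (by positivity) hM0
          · have : f (x - r • (θ:E)) = 0 := by
              apply hR
              have : R + ‖x‖ < r := by
                by_contra h; exact hm ⟨hr.le, by linarith⟩
              have h2 := norm_sub_norm_le (r • (θ:E)) x
              rw [norm_smul, hθ, mul_one, Real.norm_of_nonneg hr.le] at h2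
              rw [norm_sub_rev]; linarith
            simp [this]
      _ ≤ ∫⁻ r, (Set.Icc (0:ℝ) (R + ‖x‖)).indicator (fun _ => ENNReal.ofReal (M * (s⁻¹ * B))) r := setLIntegral_le_lintegral _ _
      _ = _ := by rw [lintegral_indicator measurableSet_Icc, lintegral_const, Measure.restrict_apply_univ]
  · rw [lintegral_const]
    have := measure_lt_top μ.toSphere Set.univ
    rw [Real.volume_Icc]
    finiteness

lemma GX_conj (μ : Measure E) [μ.IsAddHaarMeasure] {f : E → ℝ} (hf : BC f) {k : E → ℂ} (hk : Measurable k)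
    (hodd : ∀ w, w ≠ 0 → k (-w) = - k w)
    (hhom : ∀ r : ℝ, 0 < r → ∀ w, w ≠ 0 → k (r • w) = ((r ^ (Module.finrank ℝ E))⁻¹ : ℝ) • k w)
    {B : ℝ} (hB : ∀ θ : sphere (0:E) 1, ‖k θ‖ ≤ B) (j : ℤ) (x : E) :
    ‖∫ w, f (x - w) • kt k ((2:ℝ)^j) w ∂μ‖ₑ ≤ ENNReal.ofReal B * GX μ f x := by
  have hs : (0:ℝ) < (2:ℝ)^j := by positivity
  set s := (2:ℝ)^j with hsdef
  have hFi := kt_integrable μ hf hk hhom hB hs x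
  set F := fun w => f (x - w) • kt k s w with hF
  have hGi : Integrable (fun w => F w + F (-w)) μ := hFi.add hFi.comp_neg
  have h2 : ∫ w, (F w + F (-w)) ∂μ = (2:ℝ) • ∫ w, F w ∂μ := by
    rw [integral_add hFi hFi.comp_neg, integral_neg_eq_self, two_smul]
  have h3 : ‖∫ w, F w ∂μ‖ₑ ≤ ‖∫ w, (F w + F (-w)) ∂μ‖ₑ := by
    rw [h2, enorm_smul]
    apply le_mul_of_one_le_left (zero_le)
    rw [← ofReal_norm]; simp
  refine h3.trans ?_
  rw [polar_i μ hGi]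
  have hin : ∀ θ : sphere (0:E) 1, (∫ r in Set.Ioi (0:ℝ), (r ^ (Module.finrank ℝ E - 1)) • (F (r • (θ:E)) + F (-(r • (θ:E)))))
      = (∫ r : ℝ, qk s r * f (x - r • (θ:E))) • k θ := by
    intro θ
    have hθ : ‖(θ:E)‖ = 1 := by simp
    set h : ℝ → ℝ := fun r => qk s r * f (x - r • (θ:E)) with hh
    have hhi : Integrable h := by
      apply BC.integrable (μ := volume)
      apply BC.bdd_mul _ (continuous_qk hs).measurable (abs_qk_le hs)
      obtain ⟨hfm, ⟨M, hM⟩, R, hR⟩ := hf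
      refine ⟨by fun_prop, ⟨M, fun r => hM _⟩, R + ‖x‖, fun r hr => hR _ ?_⟩
      have h2 := norm_sub_norm_le (r • (θ:E)) x
      rw [norm_smul, hθ, mul_one] at h2
      rw [norm_sub_rev]; linarith
    calc _ = ∫ r in Set.Ioi (0:ℝ), (h r + h (-r)) • k θ := by
          apply setIntegral_congr_fun measurableSet_Ioi
          intro r hr
          have hr : 0 < r := hr
          simp only [hF, hh, kt_odd hodd]
          have hq : qk s (-r) = - qk s r := by unfold qk; rw [neg_sq, neg_div]
          rw [smul_neg, smul_add, smul_neg, smul_comm _ (f _), smul_comm _ (f _), kt_polar hhom hr, hq, neg_smul r, sub_neg_eq_add,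
            ]
          module
      _ = (∫ r in Set.Ioi (0:ℝ), (h r + h (-r))) • k θ := integral_smul_const _ _
      _ = (∫ r, h r) • k θ := by
          congr 1
          rw [integral_add hhi.integrableOn hhi.comp_neg.integrableOn, integral_comp_neg_Ioi, neg_zero, add_comm,
            intervalIntegral.integral_Iic_add_Ioi hhi.integrableOn hhi.integrableOn]
  simp only [hin]
  refine (enorm_integral_le_lintegral_enorm _).trans ?_
  unfold GX
  have hfm := hf.1
  rw [← lintegral_const_mul _ (measurable_MX' hfm (by fun_prop) (by fun_prop))]
  apply lintegral_mono; intro θ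
  simp only
  rw [enorm_smul, mul_comm]
  apply mul_le_mul'
  · rw [← ofReal_norm]; exact ENNReal.ofReal_le_ofReal (hB θ)
  · unfold MX
    exact le_trans le_self_add (le_iSup (f := fun j : ℤ => ‖∫ r:ℝ, qk ((2:ℝ)^j) r * f (x - r•(θ:E))‖ₑ + ∫⁻ r:ℝ, ENNReal.ofReal (pk ((2:ℝ)^j) r) * ‖f (x - r•(θ:E))‖ₑ) j)

end A10
end P10
end NT

namespace NT
section P11

section A11
variable {H : Type*} [NormedAddCommGroup H] [NormedSpace ℝ H] [FiniteDimensional ℝ H]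

lemma K_bound {K : H → ℂ} {d : ℕ} (hK : ContDiffOn ℝ 1 K {x | x ≠ 0})
    (hhom : ∀ l : ℝ, 0 < l → ∀ x, x ≠ 0 → K (l • x) = ((l ^ d)⁻¹ : ℝ) • K x) :
    ∃ B : ℝ, 0 ≤ B ∧ ∀ x, x ≠ 0 → ‖K x‖ ≤ B * (‖x‖ ^ d)⁻¹ := by
  obtain ⟨B, hB⟩ := (isCompact_sphere (0:H) 1).exists_bound_of_continuousOn (f := K)
    (hK.continuousOn.mono (fun x hx => ne_zero_of_mem_unit_sphere ⟨x, hx⟩))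
  refine ⟨max B 0, le_max_right _ _, fun x hx => ?_⟩
  have hx0 : 0 < ‖x‖ := norm_pos_iff.2 hx
  have h1 : x = ‖x‖ • (‖x‖⁻¹ • x) := by rw [smul_smul, mul_inv_cancel₀ hx0.ne', one_smul]
  have h2 : ‖x‖⁻¹ • x ≠ 0 := smul_ne_zero (inv_ne_zero hx0.ne') hx
  have h3 : ‖‖x‖⁻¹ • x‖ = 1 := norm_smul_inv_norm (𝕜 := ℝ) hx
  conv_lhs => rw [h1]
  rw [hhom _ hx0 _ h2, norm_smul, Real.norm_of_nonneg (by positivity), mul_comm]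
  gcongr
  exact (hB _ (by simp [h3])).trans (le_max_left _ _)

lemma K_lip {K : H → ℂ} {d : ℕ} (hK : ContDiffOn ℝ 1 K {x | x ≠ 0})
    (hhom : ∀ l : ℝ, 0 < l → ∀ x, x ≠ 0 → K (l • x) = ((l ^ d)⁻¹ : ℝ) • K x) :
    ∃ B : ℝ, 0 ≤ B ∧ ∀ x y, x ≠ 0 → ‖y - x‖ ≤ ‖x‖ / 2 → ‖K y - K x‖ ≤ B * ‖y - x‖ * (‖x‖ ^ (d+1))⁻¹ := by
  have hopen : IsOpen {x : H | x ≠ 0} := isOpen_ne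
  have hcpt : IsCompact {z : H | 1/2 ≤ ‖z‖ ∧ ‖z‖ ≤ 3/2} := by
    apply (isCompact_closedBall (0:H) (3/2)).of_isClosed_subset
    · exact (isClosed_le continuous_const continuous_norm).inter (isClosed_le continuous_norm continuous_const)
    · intro z hz; simpa using hz.2
  have hsub : {z : H | 1/2 ≤ ‖z‖ ∧ ‖z‖ ≤ 3/2} ⊆ {x : H | x ≠ 0} := by
    intro z hz h0; rw [h0] at hz; have := hz.1; norm_num at this
  obtain ⟨B, hB⟩ := hcpt.exists_bound_of_continuousOn (f := fderiv ℝ K)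
    ((hK.continuousOn_fderiv_of_isOpen hopen le_rfl).mono hsub)
  have hone : ∀ x y, ‖x‖ = 1 → ‖y - x‖ ≤ 1/2 → ‖K y - K x‖ ≤ max B 0 * ‖y - x‖ := by
    intro x y hx hy
    have hs : ∀ z ∈ closedBall x (1/2), z ∈ {z : H | 1/2 ≤ ‖z‖ ∧ ‖z‖ ≤ 3/2} := by
      intro z hz
      rw [mem_closedBall, dist_eq_norm] at hz
      have h1 := norm_sub_norm_le z x
      have h2 := norm_sub_norm_le x z
      rw [norm_sub_rev] at h2
      constructor <;> linarith
    apply (convex_closedBall x (1/2)).norm_image_sub_le_of_norm_fderiv_le (𝕜 := ℝ)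
    · intro z hz
      exact (hK.differentiableOn (by simp)).differentiableAt (hopen.mem_nhds (hsub (hs z hz)))
    · intro z hz; exact (hB z (hs z hz)).trans (le_max_left _ _)
    · simp
    · simpa [dist_eq_norm] using hy
  refine ⟨max B 0, le_max_right _ _, fun x y hx hxy => ?_⟩
  have hx0 : 0 < ‖x‖ := norm_pos_iff.2 hx
  have hy : y ≠ 0 := by
    intro h; rw [h] at hxy; simp at hxy; linarith
  have e1 : ∀ z : H, z ≠ 0 → K z = ((‖x‖ ^ d)⁻¹ : ℝ) • K (‖x‖⁻¹ • z) := by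
    intro z hz
    rw [← hhom _ hx0 _ (smul_ne_zero (inv_ne_zero hx0.ne') hz), smul_smul, mul_inv_cancel₀ hx0.ne', one_smul]
  have h3 : ‖‖x‖⁻¹ • x‖ = 1 := norm_smul_inv_norm (𝕜 := ℝ) hx
  have h4 : ‖‖x‖⁻¹ • y - ‖x‖⁻¹ • x‖ = ‖x‖⁻¹ * ‖y - x‖ := by
    rw [← smul_sub, norm_smul, norm_inv, norm_norm]
  have h5 := hone (‖x‖⁻¹ • x) (‖x‖⁻¹ • y) h3 (by
    rw [h4, inv_mul_le_iff₀ hx0]; linarith)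
  rw [h4] at h5
  rw [e1 x hx, e1 y hy, ← smul_sub, norm_smul, Real.norm_of_nonneg (by positivity)]
  calc _ ≤ (‖x‖ ^ d)⁻¹ * (max B 0 * (‖x‖⁻¹ * ‖y - x‖)) := by gcongr
    _ = _ := by rw [pow_succ, mul_inv]; ring

variable {E : Type*} [NormedAddCommGroup E] [NormedSpace ℝ E]

lemma kernel_est {K : H → ℂ} {m : ℕ} (hK : ContDiffOn ℝ 1 K {x | x ≠ 0})
    (hhom : ∀ l : ℝ, 0 < l → ∀ x, x ≠ 0 → K (l • x) = ((l ^ (m+1))⁻¹ : ℝ) • K x)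
    (U : E → ℝ → H) (hU : ∀ w t, ‖U w t‖ ^ 2 = ‖w‖ ^ 2 + t ^ 2) (hsub : ∀ w v t, U (w + v) t - U w 0 = U v t)
    {κ : ℝ} (hκ : 0 < κ) : ∃ C : ℝ, 0 ≤ C ∧ ∀ (w v : E) (t s : ℝ), w ≠ 0 → 0 < s → s ≤ t → t ≤ 2 * s → ‖v‖ < κ * t →
      ‖K (U (w + v) t) - kt (fun w => K (U w 0)) s w‖ ≤ C * ((‖w‖ ^ m)⁻¹ * pk s ‖w‖) := by
  obtain ⟨B, hB0, hB⟩ := K_bound hK hhom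
  obtain ⟨D, hD0, hD⟩ := K_lip hK hhom
  set A := 4 * (κ + 1) with hA
  have hA0 : 4 ≤ A := by linarith
  refine ⟨(D * A + B) + (B * ((1 + A^2) * A^m) + B * A), by positivity, fun w v t s hw hs hst hts hv => ?_⟩
  have hw0 : 0 < ‖w‖ := norm_pos_iff.2 hw
  have hX : ‖U w 0‖ = ‖w‖ := by
    have := hU w 0
    rw [← Real.sqrt_sq (norm_nonneg (U w 0)), this]; simp
  have hX0 : U w 0 ≠ 0 := by rw [← norm_pos_iff, hX]; exact hw0
  have hYt : t ≤ ‖U (w+v) t‖ := by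
    apply le_of_sq_le_sq _ (norm_nonneg _)
    rw [hU]; nlinarith [sq_nonneg ‖w+v‖]
  have hY0 : U (w+v) t ≠ 0 := by rw [← norm_pos_iff]; linarith
  have hXY : ‖U (w+v) t - U w 0‖ ≤ A / 2 * s := by
    rw [hsub]
    have h1 : ‖U v t‖ ≤ ‖v‖ + t := by
      apply le_of_sq_le_sq _ (add_nonneg (norm_nonneg v) (hs.le.trans hst))
      rw [hU]; nlinarith [mul_nonneg (norm_nonneg v) (hs.le.trans hst)]
    nlinarith
  have hden : 0 < s^2 + ‖w‖^2 := by positivity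
  set P := (‖w‖ ^ m)⁻¹ * pk s ‖w‖ with hP
  have hP0 : 0 ≤ P := mul_nonneg (by positivity) (pk_nonneg hs _)
  have hkX := hB _ hX0
  rw [hX] at hkX
  rcases le_total (A * s) ‖w‖ with hc | hc
  · have hsw : s ≤ ‖w‖ := by nlinarith
    have h1 := hD _ _ hX0 (show ‖U (w+v) t - U w 0‖ ≤ ‖U w 0‖ / 2 by rw [hX]; linarith)
    rw [hX] at h1
    have h2 : ‖K (U w 0) - kt (fun w => K (U w 0)) s w‖ ≤ B * P := by
      have : K (U w 0) - kt (fun w => K (U w 0)) s w = (s^2/(s^2+‖w‖^2)) • K (U w 0) := by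
        unfold kt qk
        have e : s^2/(s^2+‖w‖^2) = 1 - ‖w‖ * (‖w‖ / (s ^ 2 + ‖w‖ ^ 2)) := by field_simp; ring
        rw [e, sub_smul, one_smul]
      rw [this, norm_smul, Real.norm_of_nonneg (by positivity)]
      calc _ ≤ (s^2/(s^2+‖w‖^2)) * (B * (‖w‖ ^ (m+1))⁻¹) := by gcongr
        _ = B * P * (s / ‖w‖) := by rw [hP, pk, pow_succ]; field_simp; ring
        _ ≤ B * P := mul_le_of_le_one_right (by positivity) ((div_le_one hw0).2 hsw)
    have h3 : D * ‖U (w+v) t - U w 0‖ * (‖w‖ ^ (m+1+1))⁻¹ ≤ D * A * P := by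
      calc _ ≤ D * (A / 2 * s) * (‖w‖ ^ (m+1+1))⁻¹ := by gcongr
        _ = D * A * ((‖w‖ ^ m)⁻¹ * (s / (‖w‖^2 + ‖w‖^2))) := by rw [pow_succ, pow_succ]; field_simp; ring
        _ ≤ D * A * P := by rw [hP, pk]; gcongr
    calc _ ≤ ‖K (U (w+v) t) - K (U w 0)‖ + ‖K (U w 0) - kt (fun w => K (U w 0)) s w‖ := norm_sub_le_norm_sub_add_norm_sub _ _ _
      _ ≤ D * A * P + B * P := add_le_add (h1.trans h3) h2
      _ ≤ _ := by
        have : 0 ≤ (B * ((1 + A^2) * A^m) + B * A) * P := by positivity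
        linarith
  · have h1 : ‖K (U (w+v) t)‖ ≤ B * ((1 + A^2) * A^m) * P := by
      calc _ ≤ B * (‖U (w+v) t‖ ^ (m+1))⁻¹ := hB _ hY0
        _ ≤ B * (s ^ (m+1))⁻¹ := by gcongr; linarith
        _ ≤ B * (((1 + A^2) * A^m) * P) := by
          apply mul_le_mul_of_nonneg_left _ hB0
          rw [inv_le_iff_one_le_mul₀ (by positivity), hP, pk]
          have e : (1 + A ^ 2) * A ^ m * ((‖w‖ ^ m)⁻¹ * (s / (s ^ 2 + ‖w‖ ^ 2))) * s ^ (m + 1) =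
            ((1 + A^2) * s^2 * (A * s)^m) / ((s^2 + ‖w‖^2) * ‖w‖^m) := by
              rw [pow_succ, mul_pow]; field_simp; ring
          rw [e, one_le_div (by positivity)]
          have : ‖w‖^2 ≤ (A*s)^2 := by gcongr
          gcongr
          nlinarith
        _ = _ := by ring
    have h2 : ‖kt (fun w => K (U w 0)) s w‖ ≤ B * A * P := by
      unfold kt qk
      rw [norm_smul, Real.norm_of_nonneg (by positivity)]
      calc _ ≤ (‖w‖ * (‖w‖ / (s^2 + ‖w‖^2))) * (B * (‖w‖ ^ (m+1))⁻¹) := by gcongr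
        _ = B * ((‖w‖ ^ m)⁻¹ * (‖w‖ / (s^2 + ‖w‖^2))) := by rw [pow_succ]; field_simp; ring
        _ ≤ B * ((‖w‖ ^ m)⁻¹ * (A * s / (s^2 + ‖w‖^2))) := by gcongr
        _ = _ := by rw [hP, pk]; ring
    calc _ ≤ ‖K (U (w+v) t)‖ + ‖kt (fun w => K (U w 0)) s w‖ := norm_sub_le _ _
      _ ≤ _ := by
        have : 0 ≤ (D * A + B) * P := by positivity
        linarith
end A11
end P11
end NT

namespace NT
section P12

section A12
variable {H : Type*} [NormedAddCommGroup H] [NormedSpace ℝ H] [FiniteDimensional ℝ H] [MeasurableSpace H] [BorelSpace H]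
variable {E : Type*} [NormedAddCommGroup E] [NormedSpace ℝ E] [FiniteDimensional ℝ E]
  [MeasurableSpace E] [BorelSpace E] [Nontrivial E]

lemma ptw_GX (μ : Measure E) [μ.IsAddHaarMeasure] {K : H → ℂ} {m : ℕ} (hd : Module.finrank ℝ E = m + 1)
    (hKm : Measurable K) (hK : ContDiffOn ℝ 1 K {x | x ≠ 0})
    (hhom : ∀ l : ℝ, 0 < l → ∀ x, x ≠ 0 → K (l • x) = ((l ^ (m+1))⁻¹ : ℝ) • K x)
    (hodd : ∀ x, x ≠ 0 → K (-x) = - K x)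
    (U : E → ℝ → H) (hU : ∀ w t, ‖U w t‖ ^ 2 = ‖w‖ ^ 2 + t ^ 2) (hsub : ∀ w v t, U (w + v) t - U w 0 = U v t)
    (hUs : ∀ (r : ℝ) w, U (r • w) 0 = r • U w 0) (hUm : ∀ t, Measurable (fun w => U w t))
    {κ : ℝ} (hκ : 0 < κ) : ∃ C : ℝ≥0, ∀ f : E → ℝ, BC f → ∀ (x y : E) (t : ℝ), 0 < t → dist x y < κ * t →
      ‖∫ z, K (U (y - z) t) * (f z : ℂ) ∂μ‖ₑ ≤ C * GX μ f x := by
  obtain ⟨B, hB0, hB⟩ := K_bound hK hhom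
  obtain ⟨C, hC0, hC⟩ := kernel_est hK hhom U hU hsub hκ
  have hUn : ∀ w, ‖U w 0‖ = ‖w‖ := by
    intro w
    have := hU w 0
    rw [← Real.sqrt_sq (norm_nonneg (U w 0)), this]; simp
  have hU0 : ∀ w, w ≠ 0 → U w 0 ≠ 0 := by
    intro w hw; rw [← norm_pos_iff, hUn]; exact norm_pos_iff.2 hw
  set k : E → ℂ := fun w => K (U w 0) with hk
  have hkm : Measurable k := hKm.comp (hUm 0)
  have kodd : ∀ w, w ≠ 0 → k (-w) = - k w := by
    intro w hw
    have : U (-w) 0 = - U w 0 := by rw [← neg_one_smul ℝ w, hUs, neg_one_smul]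
    simp only [hk]; rw [this, hodd _ (hU0 w hw)]
  have khom : ∀ r : ℝ, 0 < r → ∀ w, w ≠ 0 → k (r • w) = ((r ^ (Module.finrank ℝ E))⁻¹ : ℝ) • k w := by
    intro r hr w hw
    simp only [hk]; rw [hUs, hhom r hr _ (hU0 w hw), hd]
  have kB : ∀ θ : sphere (0:E) 1, ‖k θ‖ ≤ B := by
    intro θ
    have hθ : ‖(θ:E)‖ = 1 := by simp
    have := hB _ (hU0 _ (ne_zero_of_mem_unit_sphere θ))
    rw [hUn, hθ] at this
    simpa using this
  refine ⟨(B + C).toNNReal, fun f hf x y t ht hxy => ?_⟩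
  obtain ⟨j, hj1, hj2⟩ := exists_dyadic ht
  have hs : (0:ℝ) < (2:ℝ)^j := by positivity
  set v := y - x with hv
  have hvn : ‖v‖ < κ * t := by rw [hv, ← dist_eq_norm, dist_comm]; exact hxy
  set Lf : E → ℂ := fun w => K (U (w + v) t) * (f (x - w) : ℂ) with hLf
  have e1 : ∫ z, K (U (y - z) t) * (f z : ℂ) ∂μ = ∫ w, Lf w ∂μ := by
    rw [← integral_sub_left_eq_self _ μ x]
    congr 1; funext w
    simp only [hLf, hv]
    rw [show y - (x - w) = w + (y - x) by abel]
  rw [e1]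
  by_cases hLi : Integrable Lf μ
  swap
  · rw [integral_undef hLi]; simp
  have hFi := kt_integrable μ hf hkm khom kB hs x
  have hF := GX_conj μ hf hkm kodd khom kB j x
  have e2 : ∫ w, Lf w ∂μ = ∫ w, f (x - w) • kt k ((2:ℝ)^j) w ∂μ + ∫ w, (Lf w - f (x - w) • kt k ((2:ℝ)^j) w) ∂μ := by
    rw [integral_sub hLi hFi]; abel
  have hne : ∀ᵐ w ∂μ, w ≠ 0 := by
    rw [ae_iff]; simp
  have h3 : ‖∫ w, (Lf w - f (x - w) • kt k ((2:ℝ)^j) w) ∂μ‖ₑ ≤ ENNReal.ofReal C * GX μ f x := by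
    refine (enorm_integral_le_lintegral_enorm _).trans ?_
    refine le_trans ?_ (mul_le_mul_right (GX_pois μ hf.1 j x) (ENNReal.ofReal C))
    rw [← lintegral_const_mul' _ _ (by finiteness)]
    apply lintegral_mono_ae
    filter_upwards [hne] with w hw
    have : Lf w - f (x - w) • kt k ((2:ℝ)^j) w = f (x - w) • (K (U (w+v) t) - kt k ((2:ℝ)^j) w) := by
      simp only [hLf]; rw [smul_sub, Complex.real_smul, Complex.real_smul, mul_comm]
    rw [this, enorm_smul, mul_comm, ← mul_assoc, ← ENNReal.ofReal_mul hC0]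
    gcongr
    rw [← ofReal_norm]
    apply ENNReal.ofReal_le_ofReal
    have := hC w v t _ hw hs hj1 hj2 hvn
    rwa [hd, Nat.add_sub_cancel]
  rw [e2]
  refine (enorm_add_le _ _).trans ((add_le_add hF h3).trans ?_)
  rw [← add_mul, ← ENNReal.ofReal_add hB0 hC0]
  rfl

lemma NT_Lp (μ : Measure E) [μ.IsAddHaarMeasure] {K : H → ℂ} {m : ℕ} (hd : Module.finrank ℝ E = m + 1)
    (hKm : Measurable K) (hK : ContDiffOn ℝ 1 K {x | x ≠ 0})
    (hhom : ∀ l : ℝ, 0 < l → ∀ x, x ≠ 0 → K (l • x) = ((l ^ (m+1))⁻¹ : ℝ) • K x)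
    (hodd : ∀ x, x ≠ 0 → K (-x) = - K x)
    (U : E → ℝ → H) (hU : ∀ w t, ‖U w t‖ ^ 2 = ‖w‖ ^ 2 + t ^ 2) (hsub : ∀ w v t, U (w + v) t - U w 0 = U v t)
    (hUs : ∀ (r : ℝ) w, U (r • w) 0 = r • U w 0) (hUm : ∀ t, Measurable (fun w => U w t))
    {κ : ℝ} (hκ : 0 < κ) {p : ℝ} (hp : 1 < p) : ∃ C : ℝ≥0, ∀ f : E → ℂ, Measurable f →
      ∫⁻ x, (⨆ (y : E) (t : ℝ) (_ : 0 < t ∧ dist x y < κ * t), ‖∫ z, K (U (y - z) t) * f z ∂μ‖ₑ) ^ p ∂μ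
        ≤ C * ∫⁻ x, ‖f x‖ₑ ^ p ∂μ := by
  obtain ⟨C, hC⟩ := ptw_GX μ hd hKm hK hhom hodd U hU hsub hUs hUm hκ
  obtain ⟨B, hB0, hB⟩ := K_bound hK hhom
  obtain ⟨D, hD⟩ := GX_Lp μ p hp
  have hp0 : 0 < p := by linarith
  refine ⟨C ^ p * 2 ^ (p - 1) * (D + D), fun f hf => ?_⟩
  set S : ℕ → Set E := fun N => {x | ‖f x‖ ≤ N ∧ ‖x‖ ≤ N} with hS
  have hSm : ∀ N, MeasurableSet (S N) := fun N =>
    (measurableSet_le hf.norm measurable_const).inter (measurableSet_le measurable_norm measurable_const)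
  set a : ℕ → E → ℝ := fun N => (S N).indicator (fun x => (f x).re) with ha
  set b : ℕ → E → ℝ := fun N => (S N).indicator (fun x => (f x).im) with hb
  have haBC : ∀ N, BC (a N) := by
    intro N
    refine ⟨(Complex.measurable_re.comp hf).indicator (hSm N), ⟨N, fun x => ?_⟩, N, fun x hx => ?_⟩
    · simp only [ha, Set.indicator_apply]
      split_ifs with h
      · exact (Complex.abs_re_le_norm _).trans h.1
      · simp
    · simp only [ha]
      exact Set.indicator_of_notMem (fun h => absurd h.2 (not_le.2 hx)) _
  have hbBC : ∀ N, BC (b N) := by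
    intro N
    refine ⟨(Complex.measurable_im.comp hf).indicator (hSm N), ⟨N, fun x => ?_⟩, N, fun x hx => ?_⟩
    · simp only [hb, Set.indicator_apply]
      split_ifs with h
      · exact (Complex.abs_im_le_norm _).trans h.1
      · simp
    · simp only [hb]
      exact Set.indicator_of_notMem (fun h => absurd h.2 (not_le.2 hx)) _
  have han : ∀ N x, ‖a N x‖ₑ ≤ ‖f x‖ₑ := by
    intro N x
    rw [enorm_le_iff_norm_le]
    simp only [ha, Set.indicator_apply]
    split_ifs
    · exact Complex.abs_re_le_norm _
    · simp
  have hbn : ∀ N x, ‖b N x‖ₑ ≤ ‖f x‖ₑ := by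
    intro N x
    rw [enorm_le_iff_norm_le]
    simp only [hb, Set.indicator_apply]
    split_ifs
    · exact Complex.abs_im_le_norm _
    · simp
  have hfN : ∀ N x, (S N).indicator f x = (a N x : ℂ) + Complex.I * (b N x : ℂ) := by
    intro N x
    simp only [ha, hb, Set.indicator_apply]
    split_ifs
    · rw [mul_comm]; exact (Complex.re_add_im _).symm
    · simp
  set g : ℕ → E → ℝ≥0∞ := fun N x => C * (GX μ (a N) x + GX μ (b N) x) with hg
  have hgm : ∀ N, Measurable (g N) := fun N =>
    ((measurable_GX μ (haBC N).1).add (measurable_GX μ (hbBC N).1)).const_mul _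
  have hKi : ∀ (h : E → ℝ), BC h → ∀ y t, 0 < t → Integrable (fun z => K (U (y - z) t) * (h z : ℂ)) μ := by
    intro h hh y t ht
    apply Integrable.bdd_mul (c := B * (t ^ (m+1))⁻¹) (hh.integrable μ).ofReal
    · exact (hKm.comp ((hUm t).comp (measurable_const.sub measurable_id))).aestronglyMeasurable
    · refine Eventually.of_forall fun z => ?_
      have hYt : t ≤ ‖U (y - z) t‖ := by
        apply le_of_sq_le_sq _ (norm_nonneg _)
        rw [hU]; nlinarith [sq_nonneg ‖y-z‖]
      have hY0 : U (y - z) t ≠ 0 := by rw [← norm_pos_iff]; linarith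
      refine (hB _ hY0).trans ?_
      gcongr
  have hptw : ∀ x y t, 0 < t → dist x y < κ * t → ‖∫ z, K (U (y - z) t) * f z ∂μ‖ₑ ≤ liminf (fun N => g N x) atTop := by
    intro x y t ht hxy
    by_cases hi : Integrable (fun z => K (U (y - z) t) * f z) μ
    swap
    · rw [integral_undef hi]; simp
    have htend : Tendsto (fun N : ℕ => ∫ z, K (U (y - z) t) * (S N).indicator f z ∂μ) atTop (𝓝 (∫ z, K (U (y - z) t) * f z ∂μ)) := by
      apply tendsto_integral_of_dominated_convergence (fun z => ‖K (U (y - z) t) * f z‖) _ hi.norm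
      · intro N
        refine Eventually.of_forall fun z => ?_
        rw [norm_mul, norm_mul]
        gcongr
        exact norm_indicator_le_norm_self _ _
      · refine Eventually.of_forall fun z => ?_
        apply tendsto_const_nhds.congr'
        obtain ⟨N0, hN0⟩ := exists_nat_ge (max ‖f z‖ ‖z‖)
        filter_upwards [eventually_ge_atTop N0] with N hN
        have : (N0:ℝ) ≤ N := by exact_mod_cast hN
        rw [Set.indicator_of_mem]
        exact ⟨(le_max_left _ _).trans (hN0.trans this), (le_max_right _ _).trans (hN0.trans this)⟩
      · intro N
        exact ((hKm.comp ((hUm t).comp (measurable_const.sub measurable_id))).mul (hf.indicator (hSm N))).aestronglyMeasurable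
    have h2 := (continuous_enorm.tendsto _).comp htend
    rw [← h2.liminf_eq]
    refine liminf_le_liminf (Eventually.of_forall fun N => ?_)
    simp only [Function.comp_apply, hg]
    have e : ∫ z, K (U (y - z) t) * (S N).indicator f z ∂μ
        = ∫ z, K (U (y - z) t) * (a N z : ℂ) ∂μ + Complex.I * ∫ z, K (U (y - z) t) * (b N z : ℂ) ∂μ := by
      rw [← integral_const_mul, ← integral_add (hKi _ (haBC N) y t ht) ((hKi _ (hbBC N) y t ht).const_mul _)]
      congr 1; funext z
      rw [hfN]; ring
    rw [e]
    refine (enorm_add_le _ _).trans ?_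
    rw [enorm_mul, mul_add]
    have hI : ‖Complex.I‖ₑ = 1 := by rw [← ofReal_norm]; simp
    rw [hI, one_mul]
    exact add_le_add (hC _ (haBC N) x y t ht hxy) (hC _ (hbBC N) x y t ht hxy)
  have hgLp : ∀ N, ∫⁻ x, g N x ^ p ∂μ ≤ ((C ^ p * 2 ^ (p - 1) * (D + D) : ℝ≥0) : ℝ≥0∞) * ∫⁻ x, ‖f x‖ₑ ^ p ∂μ := by
    intro N
    have hA : ∫⁻ x, GX μ (a N) x ^ p ∂μ ≤ D * ∫⁻ x, ‖f x‖ₑ ^ p ∂μ := by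
      refine (hD _ (haBC N)).trans ?_
      gcongr with x
      exact han N x
    have hB' : ∫⁻ x, GX μ (b N) x ^ p ∂μ ≤ D * ∫⁻ x, ‖f x‖ₑ ^ p ∂μ := by
      refine (hD _ (hbBC N)).trans ?_
      gcongr with x
      exact hbn N x
    have hc : ((C ^ p * 2 ^ (p - 1) * (D + D) : ℝ≥0) : ℝ≥0∞) = (C:ℝ≥0∞) ^ p * 2 ^ (p-1) * (D + D) := by
      push_cast
      rw [ENNReal.coe_rpow_of_nonneg _ hp0.le, ENNReal.coe_rpow_of_nonneg _ (by linarith)]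
      rfl
    calc ∫⁻ x, g N x ^ p ∂μ ≤ ∫⁻ x, ((C:ℝ≥0∞) ^ p * 2 ^ (p-1)) * (GX μ (a N) x ^ p + GX μ (b N) x ^ p) ∂μ := by
          apply lintegral_mono; intro x
          simp only [hg]
          rw [ENNReal.mul_rpow_of_nonneg _ _ hp0.le, mul_assoc]
          gcongr
          exact ENNReal.rpow_add_le_mul_rpow_add_rpow _ _ hp.le
      _ = ((C:ℝ≥0∞) ^ p * 2 ^ (p-1)) * (∫⁻ x, GX μ (a N) x ^ p ∂μ + ∫⁻ x, GX μ (b N) x ^ p ∂μ) := by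
          have h1 := (measurable_GX μ (haBC N).1).pow_const p
          have h2 := (measurable_GX μ (hbBC N).1).pow_const p
          rw [lintegral_const_mul' _ _ (ENNReal.mul_ne_top (by finiteness) (by finiteness)), lintegral_add_left h1]
      _ ≤ ((C:ℝ≥0∞) ^ p * 2 ^ (p-1)) * (D * ∫⁻ x, ‖f x‖ₑ ^ p ∂μ + D * ∫⁻ x, ‖f x‖ₑ ^ p ∂μ) := by gcongr
      _ = _ := by rw [hc]; ring
  calc _ ≤ ∫⁻ x, (liminf (fun N => g N x) atTop) ^ p ∂μ := by
        apply lintegral_mono; intro x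
        apply ENNReal.rpow_le_rpow _ hp0.le
        exact iSup_le fun y => iSup_le fun t => iSup_le fun h => hptw x y t h.1 h.2
    _ = ∫⁻ x, liminf (fun N => g N x ^ p) atTop ∂μ := by
        congr 1; funext x
        exact OrderIso.liminf_apply (ENNReal.orderIsoRpow p hp0)
    _ ≤ liminf (fun N => ∫⁻ x, g N x ^ p ∂μ) atTop := lintegral_liminf_le (fun N => (hgm N).pow_const p)
    _ ≤ _ := by
        refine (liminf_le_liminf (Eventually.of_forall hgLp)).trans ?_
        rw [liminf_const]
end A12
end P12
end NT

namespace NT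
section Top

lemma toUp_apply {n : ℕ} (x' : EuclideanSpace ℝ (Fin (n - 1))) (t : ℝ) (i : Fin n) :
    toUp x' t i = if h : (i : ℕ) < n - 1 then x' ⟨i, h⟩ else t := rfl

lemma xinit_toUp {n : ℕ} (x' : EuclideanSpace ℝ (Fin (n - 1))) (t : ℝ) : xinit (toUp x' t) = x' := by
  ext i
  change toUp x' t ⟨(i : ℕ), _⟩ = x' i
  rw [toUp_apply, dif_pos i.isLt]

lemma xlast_toUp {n : ℕ} (hn : 2 ≤ n) (x' : EuclideanSpace ℝ (Fin (n - 1))) (t : ℝ) : xlast (toUp x' t) = t := by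
  unfold xlast
  rw [dif_pos (by omega), toUp_apply, dif_neg (by simp)]

lemma norm_toUp {m : ℕ} (x' : EuclideanSpace ℝ (Fin (m + 1 - 1))) (t : ℝ) :
    ‖toUp (n := m + 1) x' t‖ ^ 2 = ‖x'‖ ^ 2 + t ^ 2 := by
  rw [EuclideanSpace.norm_sq_eq, EuclideanSpace.norm_sq_eq, Fin.sum_univ_castSucc]
  congr 1
  · apply Finset.sum_congr rfl
    intro i _
    rw [toUp_apply, dif_pos (by simp)]
    rfl
  · rw [toUp_apply, dif_neg (by simp)]; simp

lemma norm_toUp' {n : ℕ} (hn : 2 ≤ n) (x' : EuclideanSpace ℝ (Fin (n - 1))) (t : ℝ) :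
    ‖toUp x' t‖ ^ 2 = ‖x'‖ ^ 2 + t ^ 2 := by
  obtain ⟨m, rfl⟩ : ∃ m, n = m + 1 := ⟨n - 1, by omega⟩
  exact norm_toUp x' t

lemma toUp_sub {n : ℕ} (w v : EuclideanSpace ℝ (Fin (n - 1))) (t : ℝ) : toUp (w + v) t - toUp w 0 = toUp v t := by
  ext i
  rw [PiLp.sub_apply]
  simp only [toUp_apply]
  split_ifs <;> simp

lemma toUp_smul {n : ℕ} (r : ℝ) (w : EuclideanSpace ℝ (Fin (n - 1))) : toUp (r • w) 0 = r • toUp w 0 := by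
  ext i
  rw [PiLp.smul_apply]
  simp only [toUp_apply]
  split_ifs <;> simp

lemma measurable_toUp {n : ℕ} (t : ℝ) : Measurable (fun w : EuclideanSpace ℝ (Fin (n - 1)) => toUp w t) := by
  refine (MeasurableEquiv.toLp 2 (Fin n → ℝ)).measurable.comp (measurable_pi_lambda _ fun i => ?_)
  by_cases h : (i : ℕ) < n - 1
  · simp only [dif_pos h]; fun_prop
  · simp only [dif_neg h]; fun_prop

lemma pd_contDiffOn {n : ℕ} (j : Fin n) {u : EuclideanSpace ℝ (Fin n) → ℂ} (hu : ContDiffOn ℝ (⊤ : ℕ∞) u {x | x ≠ 0}) :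
    ContDiffOn ℝ 1 (pd j u) {x | x ≠ 0} := by
  have h := hu.fderiv_of_isOpen (m := 1) isOpen_ne (by rw [one_add_one_eq_two]; exact WithTop.coe_le_coe.2 le_top)
  exact h.clm_apply contDiffOn_const

lemma pd_odd {n : ℕ} (j : Fin n) {u : EuclideanSpace ℝ (Fin n) → ℂ} (hu : ∀ x, x ≠ 0 → u (-x) = u x)
    (x : EuclideanSpace ℝ (Fin n)) (hx : x ≠ 0) : pd j u (-x) = - pd j u x := by
  unfold pd
  have h1 : (fun y => u (-y)) =ᶠ[𝓝 x] u := by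
    filter_upwards [isOpen_ne.mem_nhds hx] with y hy
    exact hu y hy
  have h2 := (ContinuousLinearEquiv.neg ℝ (M := EuclideanSpace ℝ (Fin n))).comp_right_fderiv (f := u) (x := x)
  have h3 : u ∘ (ContinuousLinearEquiv.neg ℝ (M := EuclideanSpace ℝ (Fin n))) = fun y => u (-y) := rfl
  rw [h3, h1.fderiv_eq] at h2
  rw [h2]
  simp

end Top
end NT

/-- Calderón–Zygmund bound for convolution with `K = ∂_j E_{αβ}`
(smooth away from the origin, odd, positively homogeneous of degree `-(n-1)`):
the nontangential maximal function of
`u(x',t) = ∫ (∂_j E_{αβ})(x'-y', t) f(y') dy'` is `L^p` bounded. -/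
theorem statement12
    (n M : ℕ) (hn : 2 ≤ n) (hM : 1 ≤ M)
    (E : EuclideanSpace ℝ (Fin n) → Matrix (Fin M) (Fin M) ℂ)
    (hEsmooth : ∀ α β : Fin M,
      ContDiffOn ℝ (⊤ : ℕ∞) (fun x => E x α β) {x : EuclideanSpace ℝ (Fin n) | x ≠ 0})
    (hEeven : ∀ x : EuclideanSpace ℝ (Fin n), x ≠ 0 → E (-x) = E x)
    (hEhom : ∀ (α β : Fin M) (j : Fin n) (l : ℝ), 0 < l →
      ∀ x : EuclideanSpace ℝ (Fin n), x ≠ 0 →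
        pd j (fun y => E y α β) (l • x)
          = ((l : ℂ) ^ ((1 : ℤ) - (n : ℤ))) * pd j (fun y => E y α β) x)
    (j : Fin n) (α β : Fin M) (p : ℝ) (hp : 1 < p) (κ : ℝ) (hκ : 0 < κ) :
    ∃ C : ℝ, 0 < C ∧
      ∀ f : EuclideanSpace ℝ (Fin (n - 1)) → ℂ,
        MemLp f (ENNReal.ofReal p) volume →
        (∫⁻ x' : EuclideanSpace ℝ (Fin (n - 1)),
            (ntMax κ
              (fun x : EuclideanSpace ℝ (Fin n) =>
                ∫ y' : EuclideanSpace ℝ (Fin (n - 1)),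
                  pd j (fun y => E y α β) (toUp (xinit x - y') (xlast x)) * f y')
              x') ^ p) ^ (1 / p)
          ≤ ENNReal.ofReal C * eLpNorm f (ENNReal.ofReal p) volume := by
  have hd : Module.finrank ℝ (EuclideanSpace ℝ (Fin (n - 1))) = (n - 2) + 1 := by
    rw [finrank_euclideanSpace_fin]; omega
  haveI : Nontrivial (EuclideanSpace ℝ (Fin (n - 1))) :=
    Module.nontrivial_of_finrank_pos (R := ℝ) (by rw [hd]; omega)
  have hp0 : 0 < p := by linarith
  set K : EuclideanSpace ℝ (Fin n) → ℂ := pd j (fun y => E y α β) with hKdef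
  have hKm : Measurable K := measurable_fderiv_apply_const ℝ _ _
  have hhom : ∀ l : ℝ, 0 < l → ∀ x, x ≠ 0 → K (l • x) = ((l ^ ((n - 2) + 1))⁻¹ : ℝ) • K x := by
    intro l hl x hx
    rw [hKdef, hEhom α β j l hl x hx, Complex.real_smul]
    congr 1
    rw [show (1:ℤ) - (n:ℤ) = -(((n - 2) + 1 : ℕ) : ℤ) by omega, zpow_neg, zpow_natCast]
    push_cast; rfl
  obtain ⟨C, hC⟩ := NT.NT_Lp volume hd hKm (NT.pd_contDiffOn j (hEsmooth α β)) hhom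
    (NT.pd_odd j (fun x hx => by simp only [hEeven x hx])) toUp (NT.norm_toUp' hn) NT.toUp_sub NT.toUp_smul
    NT.measurable_toUp hκ hp
  refine ⟨((C ^ (1 / p) : ℝ≥0) : ℝ) + 1, by positivity, fun f hf => ?_⟩
  obtain ⟨f', hf'm, hff'⟩ := hf.aestronglyMeasurable
  have h1 := hC f' hf'm.measurable
  have h2 : ∀ x', ntMax κ (fun x : EuclideanSpace ℝ (Fin n) =>
      ∫ y' : EuclideanSpace ℝ (Fin (n - 1)), K (toUp (xinit x - y') (xlast x)) * f y') x'
      = ⨆ (y : EuclideanSpace ℝ (Fin (n - 1))) (t : ℝ) (_ : 0 < t ∧ dist x' y < κ * t),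
        ‖∫ z, K (toUp (y - z) t) * f' z‖ₑ := by
    intro x'
    unfold ntMax
    simp only [NT.xinit_toUp, NT.xlast_toUp hn]
    have : ∀ y t, ∫ z, K (toUp (y - z) t) * f z = ∫ z, K (toUp (y - z) t) * f' z := by
      intro y t
      apply integral_congr_ae
      filter_upwards [hff'] with z hz
      rw [hz]
    simp only [this]
    rfl
  simp only [h2]
  rw [eLpNorm_congr_ae hff', eLpNorm_eq_lintegral_rpow_enorm_toReal (by simpa using hp0) ENNReal.ofReal_ne_top,
    ENNReal.toReal_ofReal hp0.le]
  refine (ENNReal.rpow_le_rpow h1 (by positivity)).trans ?_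
  rw [ENNReal.mul_rpow_of_nonneg _ _ (by positivity)]
  gcongr
  rw [← ENNReal.coe_rpow_of_nonneg _ (by positivity), ← ENNReal.ofReal_coe_nnreal]
  apply ENNReal.ofReal_le_ofReal
  linarith

end
end

section
/- Let n ≥ 2, M ≥ 1, let A = (a^{αβ}_{rs}) be a complex coefficient tensor, let E = (E_{γβ}) : ℝⁿ∖{0} → ℂ^{M×M} be C² with each ∂_r E_{γβ} positively homogeneous of degree 1-n, and suppose k = (k_{γα}) : ℝⁿ∖{0} → ℂ^{M×M} satisfies Σ_{r,β} a^{βα}_{rs}(∂_r E_{γβ})(x) = x_s k_{γα}(x) for all x ∈ ℝⁿ∖{0}, all s, γ, α. Set P := 2k(·,1) on ℝ^{n-1} and Q^{(j)}(x') := ((∂_j E_{γβ})(x',1))_{γ,β}. Then for every γ,α ∈ {1,…,M} and every (x',t) ∈ ℝⁿ₊: ∂_t[(P_{γα})_t(x')] = -2 Σ_{s=1}^{n-1} Σ_{r,β} a^{βα}_{rs} ∂_{x_s}[(Q^{(r)}_{γβ})_t(x')]. -/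
open MeasureTheory Filter Metric Real
open scoped ENNReal NNReal Topology

noncomputable section

/-- The auxiliary kernel `Q^{(j)}_{γβ}(x') := (∂_j E_{γβ})(x', 1)`. -/
def Qker {n M : ℕ} (E : EuclideanSpace ℝ (Fin n) → Matrix (Fin M) (Fin M) ℂ)
    (j : Fin n) (γ β : Fin M) (x' : EuclideanSpace ℝ (Fin (n - 1))) : ℂ :=
  pd j (fun y => E y γ β) (toUp x' 1)

/-- The dilated auxiliary kernel `(Q^{(j)}_{γβ})_t(x') = t^{1-n} Q^{(j)}_{γβ}(x'/t)`,
viewed as a function of the point `x = (x', t) ∈ ℝⁿ₊`. -/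
def QkerDil {n M : ℕ} (E : EuclideanSpace ℝ (Fin n) → Matrix (Fin M) (Fin M) ℂ)
    (j : Fin n) (γ β : Fin M) (x : EuclideanSpace ℝ (Fin n)) : ℂ :=
  ((xlast x : ℂ) ^ ((1 : ℤ) - (n : ℤ))) * Qker E j γ β ((xlast x)⁻¹ • xinit x)
lemma aux_sum {n : ℕ} (h : 0 < n) (f : Fin n → ℂ) :
    ∑ i, f i = ∑ s : Fin (n - 1), f (finUp s) + f (lastIdx n h) := by
  obtain ⟨m, rfl⟩ : ∃ m, n = m + 1 := ⟨n - 1, by omega⟩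
  exact Fin.sum_univ_castSucc f

lemma aux_xlast {n : ℕ} (h : 0 < n) (x : EuclideanSpace ℝ (Fin n)) :
    xlast x = x (lastIdx n h) := by
  simp [xlast, lastIdx, h]

lemma aux_toUp {n : ℕ} (h : 0 < n) (x : EuclideanSpace ℝ (Fin n)) (hx : 0 < xlast x) :
    toUp ((xlast x)⁻¹ • xinit x) 1 = (xlast x)⁻¹ • x := by
  ext i
  by_cases hi : (i : ℕ) < n - 1
  · simp [toUp, xinit, hi]
  · have hi' : i = lastIdx n h := by
      apply Fin.ext
      have := i.isLt
      simp only [lastIdx]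
      omega
    have h1 : toUp ((xlast x)⁻¹ • xinit x) 1 i = 1 := by simp [toUp, hi]
    rw [h1, hi', PiLp.smul_apply, ← aux_xlast h, smul_eq_mul, inv_mul_cancel₀ hx.ne']

lemma aux_ne {n : ℕ} (h : 0 < n) (x : EuclideanSpace ℝ (Fin n)) (hx : 0 < xlast x) : x ≠ 0 := by
  rintro rfl
  rw [aux_xlast h] at hx
  simp at hx

lemma aux_diff {n : ℕ} (u : EuclideanSpace ℝ (Fin n) → ℂ)
    (hu : ContDiffOn ℝ 2 u {x : EuclideanSpace ℝ (Fin n) | x ≠ 0})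
    (x : EuclideanSpace ℝ (Fin n)) (hx : x ≠ 0) (r : Fin n) :
    DifferentiableAt ℝ (pd r u) x := by
  have h1 : ContDiffAt ℝ 2 u x := hu.contDiffAt (isOpen_ne.mem_nhds hx)
  have h2 : ContDiffAt ℝ 1 (fderiv ℝ u) x := h1.fderiv_right (by norm_num)
  have h3 : DifferentiableAt ℝ (fderiv ℝ u) x := h2.differentiableAt (by norm_num)
  exact h3.clm_apply (differentiableAt_const _)

lemma aux_euler {n : ℕ} (f : EuclideanSpace ℝ (Fin n) → ℂ) (x : EuclideanSpace ℝ (Fin n))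
    (hf : DifferentiableAt ℝ f x)
    (hhom : ∀ l : ℝ, 0 < l → f (l • x) = (l : ℂ) ^ (-(n : ℤ)) * f x) :
    fderiv ℝ f x x = -(n : ℂ) * f x := by
  have h1 : HasDerivAt (fun l : ℝ => f (l • x)) (fderiv ℝ f x x) 1 := by
    have ha : HasDerivAt (fun l : ℝ => l • x) x 1 := by
      simpa using (hasDerivAt_id (1 : ℝ)).smul_const x
    have hb : HasFDerivAt f (fderiv ℝ f x) ((1 : ℝ) • x) := by
      rw [one_smul]; exact hf.hasFDerivAt
    exact hb.comp_hasDerivAt (1 : ℝ) ha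
  have h2 : HasDerivAt (fun l : ℝ => (l : ℂ) ^ (-(n : ℤ)) * f x) (-(n : ℂ) * f x) 1 := by
    have h0 : HasDerivAt (fun z : ℂ => z ^ (-(n : ℤ))) (-(n : ℂ)) ((1 : ℝ) : ℂ) := by
      simpa using hasDerivAt_zpow (-(n : ℤ)) (1 : ℂ) (Or.inl one_ne_zero)
    exact h0.comp_ofReal.mul_const _
  have h3 : (fun l : ℝ => f (l • x)) =ᶠ[𝓝 1] fun l : ℝ => (l : ℂ) ^ (-(n : ℤ)) * f x := by
    filter_upwards [lt_mem_nhds (zero_lt_one (α := ℝ))] with l hl using hhom l hl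
  exact h1.unique (h2.congr_of_eventuallyEq h3)

lemma aux_pd {n : ℕ} (f : EuclideanSpace ℝ (Fin n) → ℂ) (x : EuclideanSpace ℝ (Fin n))
    (hf : DifferentiableAt ℝ f x) (i : Fin n) :
    pd i (fun z => ((z i : ℝ) : ℂ) * f z) x
      = f x + ((x i : ℝ) : ℂ) * pd i f x := by
  have hc : HasFDerivAt (fun z : EuclideanSpace ℝ (Fin n) => ((z i : ℝ) : ℂ))
      (Complex.ofRealCLM.comp (EuclideanSpace.proj i)) x :=
    (Complex.ofRealCLM.comp (EuclideanSpace.proj (𝕜 := ℝ) i)).hasFDerivAt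
  have := (hc.mul hf.hasFDerivAt).fderiv
  unfold pd
  rw [show (fun z : EuclideanSpace ℝ (Fin n) => ((z i : ℝ) : ℂ) * f z) =
    (fun z : EuclideanSpace ℝ (Fin n) => ((z i : ℝ) : ℂ)) * f from rfl, this]
  simp
  ring

lemma aux_div {n : ℕ} (f : EuclideanSpace ℝ (Fin n) → ℂ) (x : EuclideanSpace ℝ (Fin n))
    (hf : DifferentiableAt ℝ f x)
    (hhom : ∀ l : ℝ, 0 < l → f (l • x) = (l : ℂ) ^ (-(n : ℤ)) * f x) :
    ∑ i, pd i (fun z => ((z i : ℝ) : ℂ) * f z) x = 0 := by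
  simp_rw [aux_pd f x hf]
  rw [Finset.sum_add_distrib]
  have h1 : ∑ i, ((x i : ℝ) : ℂ) * pd i f x = fderiv ℝ f x x := by
    conv_rhs => rw [show fderiv ℝ f x x = fderiv ℝ f x (∑ i, x i • EuclideanSpace.single i (1 : ℝ)) by
      congr 1
      ext j
      simp [Finset.sum_apply, Pi.single_apply]]
    simp [pd]
  rw [h1, aux_euler f x hf hhom]
  simp

/-- The identity
`∂_t[(P_{γα})_t(x')] = -2 Σ_{s=1}^{n-1} Σ_{r,β} a^{βα}_{rs} ∂_{x_s}[(Q^{(r)}_{γβ})_t(x')]`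
in the upper half space, where `P = 2k(·,1)` and `A r s β α` stands for `a^{βα}_{rs}`. -/
theorem statement14
    (n M : ℕ) (hn : 2 ≤ n) (hM : 1 ≤ M)
    (A : Fin n → Fin n → Fin M → Fin M → ℂ)
    (E : EuclideanSpace ℝ (Fin n) → Matrix (Fin M) (Fin M) ℂ)
    (hEreg : ∀ γ β : Fin M,
      ContDiffOn ℝ 2 (fun x => E x γ β) {x : EuclideanSpace ℝ (Fin n) | x ≠ 0})
    (hEhom : ∀ (γ β : Fin M) (r : Fin n) (l : ℝ), 0 < l →
      ∀ x : EuclideanSpace ℝ (Fin n), x ≠ 0 →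
        pd r (fun y => E y γ β) (l • x)
          = ((l : ℂ) ^ ((1 : ℤ) - (n : ℤ))) * pd r (fun y => E y γ β) x)
    (k : EuclideanSpace ℝ (Fin n) → Matrix (Fin M) (Fin M) ℂ)
    (hk : ∀ x : EuclideanSpace ℝ (Fin n), x ≠ 0 → ∀ (s : Fin n) (γ α : Fin M),
      (∑ r, ∑ β, A r s β α * pd r (fun y => E y γ β) x) = ((x s : ℝ) : ℂ) * k x γ α) :
    ∀ (γ α : Fin M), ∀ x ∈ upperHalfSpace n,
      pd (lastIdx n (by omega))
        (fun z : EuclideanSpace ℝ (Fin n) =>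
          ((xlast z : ℂ) ^ ((1 : ℤ) - (n : ℤ))) *
            (2 * k (toUp ((xlast z)⁻¹ • xinit z) 1) γ α)) x
      = -2 * ∑ s : Fin (n - 1), ∑ r : Fin n, ∑ β : Fin M,
          A r (finUp s) β α * pd (finUp s) (QkerDil E r γ β) x := by
  have hn0 : 0 < n := by omega
  intro γ α x hx
  have hx0 : 0 < xlast x := hx
  have hxne := aux_ne hn0 x hx0
  have hcl : Continuous (fun z : EuclideanSpace ℝ (Fin n) => xlast z) := by
    simp_rw [aux_xlast hn0]
    fun_prop
  have hev : ∀ᶠ z in 𝓝 x, 0 < xlast z :=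
    hcl.continuousAt.eventually (lt_mem_nhds hx0)
  set L := lastIdx n hn0 with hL
  set f : EuclideanSpace ℝ (Fin n) → ℂ := fun z => k z γ α with hf
  -- differentiability of the sums
  have hGd : ∀ s : Fin n, DifferentiableAt ℝ
      (fun z => ∑ r, ∑ β, A r s β α * pd r (fun y => E y γ β) z) x := by
    intro s
    refine DifferentiableAt.fun_sum fun r _ => DifferentiableAt.fun_sum fun β _ => ?_
    exact (aux_diff _ (hEreg γ β) x hxne r).const_mul _
  have hfe : f =ᶠ[𝓝 x] fun z =>
      (∑ r, ∑ β, A r L β α * pd r (fun y => E y γ β) z) * ((z L : ℝ) : ℂ)⁻¹ := by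
    filter_upwards [hev] with z hz
    have hz' : ((z L : ℝ) : ℂ) ≠ 0 := by
      rw [hL, ← aux_xlast hn0]
      exact_mod_cast hz.ne'
    rw [hk z (aux_ne hn0 z hz) L γ α]
    field_simp
    rfl
  have hxL : ((x L : ℝ) : ℂ) ≠ 0 := by
    rw [hL, ← aux_xlast hn0]
    exact_mod_cast hx0.ne'
  have hfd : DifferentiableAt ℝ f x := by
    refine DifferentiableAt.congr_of_eventuallyEq ?_ hfe
    refine (hGd L).mul (DifferentiableAt.inv ?_ hxL)
    exact (Complex.ofRealCLM.comp (EuclideanSpace.proj (𝕜 := ℝ) L)).differentiableAt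
  have hhom : ∀ z : EuclideanSpace ℝ (Fin n), 0 < xlast z → ∀ l : ℝ, 0 < l →
      f (l • z) = (l : ℂ) ^ (-(n : ℤ)) * f z := by
    intro z hz l hl
    have hzne := aux_ne hn0 z hz
    have hzL : ((z L : ℝ) : ℂ) ≠ 0 := by
      rw [hL, ← aux_xlast hn0]
      exact_mod_cast hz.ne'
    have hlc : (l : ℂ) ≠ 0 := by exact_mod_cast hl.ne'
    have h1 := hk (l • z) (smul_ne_zero hl.ne' hzne) L γ α
    have h2 := hk z hzne L γ α
    have h3 : (∑ r, ∑ β, A r L β α * pd r (fun y => E y γ β) (l • z))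
        = (l : ℂ) ^ ((1 : ℤ) - (n : ℤ)) *
          ∑ r, ∑ β, A r L β α * pd r (fun y => E y γ β) z := by
      rw [Finset.mul_sum]
      refine Finset.sum_congr rfl fun r _ => ?_
      rw [Finset.mul_sum]
      refine Finset.sum_congr rfl fun β _ => ?_
      rw [hEhom γ β r l hl z hzne]
      ring
    rw [h3, h2, sub_eq_add_neg, zpow_add₀ hlc, zpow_one] at h1
    simp only [PiLp.smul_apply, smul_eq_mul, Complex.ofReal_mul] at h1
    have h4 : ((l : ℂ) * ((z L : ℝ) : ℂ)) * k (l • z) γ α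
        = ((l : ℂ) * ((z L : ℝ) : ℂ)) * ((l : ℂ) ^ (-(n : ℤ)) * k z γ α) := by
      rw [← h1]; ring
    exact mul_left_cancel₀ (mul_ne_zero hlc hzL) h4
  have hdiv := aux_div f x hfd (hhom x hx0)
  rw [aux_sum hn0] at hdiv
  -- left side
  have hleft : (fun z : EuclideanSpace ℝ (Fin n) =>
          ((xlast z : ℂ) ^ ((1 : ℤ) - (n : ℤ))) *
            (2 * k (toUp ((xlast z)⁻¹ • xinit z) 1) γ α)) =ᶠ[𝓝 x]
      fun z => 2 * (((z L : ℝ) : ℂ) * f z) := by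
    filter_upwards [hev] with z hz
    have h1 := hhom z hz (xlast z)⁻¹ (inv_pos.mpr hz)
    have hlc : (xlast z : ℂ) ≠ 0 := by exact_mod_cast hz.ne'
    simp only [hf] at h1 ⊢
    rw [aux_toUp hn0 z hz, h1, hL, ← aux_xlast hn0, sub_eq_add_neg, zpow_add₀ hlc]
    push_cast
    rw [inv_zpow', neg_neg, zpow_one, zpow_neg]
    field_simp
  have hQ : ∀ r β, QkerDil E r γ β =ᶠ[𝓝 x] pd r (fun y => E y γ β) := by
    intro r β
    filter_upwards [hev] with z hz
    have hlc : (xlast z : ℂ) ≠ 0 := by exact_mod_cast hz.ne'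
    unfold QkerDil Qker
    rw [aux_toUp hn0 z hz, hEhom γ β r _ (inv_pos.mpr hz) z (aux_ne hn0 z hz)]
    push_cast
    rw [← mul_assoc, ← mul_zpow, mul_inv_cancel₀ hlc, one_zpow, one_mul]
  have hright : ∀ s : Fin n, ∑ r : Fin n, ∑ β : Fin M, A r s β α * pd s (QkerDil E r γ β) x
      = pd s (fun z => ((z s : ℝ) : ℂ) * f z) x := by
    intro s
    have he : (fun z => ((z s : ℝ) : ℂ) * f z) =ᶠ[𝓝 x]
        fun z => ∑ r, ∑ β, A r s β α * pd r (fun y => E y γ β) z := by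
      filter_upwards [hev] with z hz
      exact (hk z (aux_ne hn0 z hz) s γ α).symm
    have hd : ∀ r β, DifferentiableAt ℝ
        (fun z => A r s β α * pd r (fun y => E y γ β) z) x := fun r β =>
      (aux_diff _ (hEreg γ β) x hxne r).const_mul _
    unfold pd at he hd ⊢
    rw [he.fderiv_eq, fderiv_fun_sum (fun r _ => DifferentiableAt.fun_sum fun β _ => hd r β),
      ContinuousLinearMap.sum_apply]
    refine Finset.sum_congr rfl fun r _ => ?_
    rw [fderiv_fun_sum (fun β _ => hd r β), ContinuousLinearMap.sum_apply]
    refine Finset.sum_congr rfl fun β _ => ?_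
    rw [(hQ r β).fderiv_eq]
    have := congrArg (fun T => T (EuclideanSpace.single s (1 : ℝ)))
      (fderiv_const_mul (aux_diff _ (hEreg γ β) x hxne r) (A r s β α))
    exact this.symm
  simp_rw [hright]
  have hpl : pd L (fun z => 2 * (((z L : ℝ) : ℂ) * f z)) x
      = 2 * pd L (fun z => ((z L : ℝ) : ℂ) * f z) x := by
    unfold pd
    rw [fderiv_const_mul]
    · rfl
    · exact ((Complex.ofRealCLM.comp (EuclideanSpace.proj (𝕜 := ℝ) L)).differentiableAt).mul hfd
  have hpe : ∀ g h : EuclideanSpace ℝ (Fin n) → ℂ, g =ᶠ[𝓝 x] h → pd L g x = pd L h x := by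
    intro g h hgh
    unfold pd
    rw [hgh.fderiv_eq]
  rw [hpe _ _ hleft, hpl]
  linear_combination 2 * hdiv

end
end
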